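/- Let 2 ≤ p < N < 2p, let Ω ⊂ ℝ^N be a bounded domain, 0 < λ < λ_1, and suppose the regular part H_λ(·,x_0) = G_λ(·,x_0) − Γ(·,x_0) of the Green function satisfies H_λ(x_0,x_0) > 0, is bounded, and is α-Hölder continuous at x_0 for some α ∈ (0,1). Then, given that PU_{ε,x_0} = U_{ε,x_0} + (C_1/C_0) ε^{(N−p)/p} H_λ(·,x_0) + o(ε^{(N−p)/p}) uniformly in Ω, one has the energy expansion Q_λ(PU_{ε,x_0}) = S_0 − (p−1) S_0^{(p−N)/p} (∫_{ℝ^N} U_1^{p*−1}) (C_1/C_0) ε^{N−p} H_λ(x_0,x_0) + o(ε^{N−p}) as ε → 0, and consequently S_λ < S_0. -/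

import Mathlib

open MeasureTheory Real Filter

noncomputable section

/-- Divergence of a vector field on `ℝ^N`. -/
def vdiv {N : ℕ} (F : EuclideanSpace ℝ (Fin N) → EuclideanSpace ℝ (Fin N))
    (x : EuclideanSpace ℝ (Fin N)) : ℝ :=
  ∑ i, fderiv ℝ F x (EuclideanSpace.single i 1) i

/-- The `p`-Laplace operator `Δ_p u = div(|∇u|^{p-2} ∇u)`. -/
def pLap {N : ℕ} (p : ℝ) (u : EuclideanSpace ℝ (Fin N) → ℝ)
    (x : EuclideanSpace ℝ (Fin N)) : ℝ :=
  vdiv (fun y => ‖gradient u y‖ ^ (p - 2) • gradient u y) x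

/-- Test functions: smooth, compactly supported inside `Ω`
(their `W^{1,p}`-closure is `W_0^{1,p}(Ω)`). -/
def TestOn {N : ℕ} (Ω : Set (EuclideanSpace ℝ (Fin N)))
    (u : EuclideanSpace ℝ (Fin N) → ℝ) : Prop :=
  ContDiff ℝ (⊤ : ℕ∞) u ∧ HasCompactSupport u ∧ tsupport u ⊆ Ω

/-- The Rayleigh quotient `Q_λ(u)` of the Brezis–Nirenberg problem,
with `p^* = Np/(N-p)`. -/
def Qfun {N : ℕ} (Ω : Set (EuclideanSpace ℝ (Fin N))) (p lam : ℝ)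
    (u : EuclideanSpace ℝ (Fin N) → ℝ) : ℝ :=
  ((∫ x in Ω, ‖gradient u x‖ ^ p) - lam * ∫ x in Ω, |u x| ^ p) /
    (∫ x in Ω, |u x| ^ ((N : ℝ) * p / ((N : ℝ) - p))) ^ (p / ((N : ℝ) * p / ((N : ℝ) - p)))

/-- The first eigenvalue `λ₁` of `-Δ_p` on `Ω`. -/
def lamOne {N : ℕ} (Ω : Set (EuclideanSpace ℝ (Fin N))) (p : ℝ) : ℝ :=
  sInf {r : ℝ | ∃ u, TestOn Ω u ∧ u ≠ 0 ∧
    r = (∫ x in Ω, ‖gradient u x‖ ^ p) / ∫ x in Ω, |u x| ^ p}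

/-- `S_λ = inf Q_λ` over `W_0^{1,p}(Ω) \ {0}`. -/
def Sfun {N : ℕ} (Ω : Set (EuclideanSpace ℝ (Fin N))) (p lam : ℝ) : ℝ :=
  sInf {r : ℝ | ∃ u, TestOn Ω u ∧ u ≠ 0 ∧ r = Qfun Ω p lam u}

open Asymptotics Topology

/-- The standard bubble `U_{ε,x₀}` with `C₁ = N^{(N-p)/p²}((N-p)/(p-1))^{(p-1)(N-p)/p²}`. -/
def bubble {N : ℕ} (p ε : ℝ) (x₀ x : EuclideanSpace ℝ (Fin N)) : ℝ :=
  (N : ℝ) ^ (((N : ℝ) - p) / p ^ 2) *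
      (((N : ℝ) - p) / (p - 1)) ^ ((p - 1) * ((N : ℝ) - p) / p ^ 2) *
    (ε / (ε ^ p + ‖x - x₀‖ ^ (p / (p - 1)))) ^ (((N : ℝ) - p) / p)

/-- `C₀`, the constant of the fundamental solution. -/
def Czero (N : ℕ) (p : ℝ) : ℝ :=
  ((p - 1) / ((N : ℝ) - p)) *
    ((N : ℝ) * (volume (Metric.ball (0 : EuclideanSpace ℝ (Fin N)) 1)).toReal)
      ^ (-(1 / (p - 1)))

/-- `C₁`, the constant of the standard bubble. -/
def Cone (N : ℕ) (p : ℝ) : ℝ :=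
  (N : ℝ) ^ (((N : ℝ) - p) / p ^ 2) *
    (((N : ℝ) - p) / (p - 1)) ^ ((p - 1) * ((N : ℝ) - p) / p ^ 2)

/-!
Write `U` for the bubble, `q = p^*`, `A = ∫ U₁^q`, `B = ∫ U₁^(q-1)` and `h` for the uniform limit
of `(PU - U) / ε^{(N-p)/p}`. Testing the equation of `PU` with `PU` itself gives
`Q_λ(PU) = ∫_Ω U^(q-1) PU / (∫_Ω PU^q)^(p/q)`. After division by `ε^{N-p-(N-p)/p}` the weight
`U^(q-1)` concentrates to `B` times the Dirac mass at `x₀`, so the numerator is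
`A + B h(x₀) ε^{N-p}` and, by a first order expansion of `t^q`, the denominator integral is
`A + q B h(x₀) ε^{N-p}`, both up to `o(ε^{N-p})`. The quotient is therefore
`A^{p/N} - (p-1) A^{-p/q} B h(x₀) ε^{N-p} + o(ε^{N-p})`, which lies below `A^{p/N} = S₀` for small
`ε` when `h(x₀) > 0`.

As `PU` is only `C¹` up to the boundary and need not have compact support, both the testing and the
bound `S_λ ≤ Q_λ(PU)` go through the truncations `softThreshold δ (PU)` and a limit `δ → 0⁺`; for
the latter the truncations are mollified as well.
-/

/-! ### The divergence theorem for compactly supported fields -/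

section Divergence

variable {N : ℕ}

local notation "E" => EuclideanSpace ℝ (Fin N)

lemma vdiv_eq_zero_of_eventuallyEq_zero {F : E → E} {x : E} (h : F =ᶠ[𝓝 x] 0) :
    vdiv F x = 0 := by
  simp [vdiv, h.fderiv_eq]

lemma vdiv_smul {f : E → ℝ} {f' : E} {F : E → E} {x : E} (hf : HasGradientAt f f' x)
    (hF : DifferentiableAt ℝ F x) :
    vdiv (fun y => f y • F y) x = inner ℝ f' (F x) + f x * vdiv F x := by
  have hfF := (hf.hasFDerivAt.smul hF.hasFDerivAt).fderiv
  have hinner : inner ℝ f' (F x) = ∑ i, f' i * F x i := by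
    simp [PiLp.inner_apply, mul_comm]
  simp [vdiv, show fderiv ℝ (fun y => f y • F y) x = _ from hfF, Finset.sum_add_distrib,
    Finset.mul_sum, hinner, EuclideanSpace.inner_single_right, add_comm]

lemma exists_box_of_hasCompactSupport {F : E → E} (hF : HasCompactSupport F) :
    ∃ T : ℝ, 0 < T ∧ ∀ x i, T ≤ |x i| → F =ᶠ[𝓝 x] 0 := by
  obtain ⟨T, hT0, hT⟩ := hF.isCompact.isBounded.exists_pos_norm_lt
  refine ⟨T, hT0, fun x i hi => notMem_tsupport_iff_eventuallyEq.1 fun hx => ?_⟩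
  exact (hT x hx).not_ge (hi.trans (PiLp.norm_apply_le x i))

lemma integral_vdiv_eq_zero {F : E → E} (hF : Differentiable ℝ F) (hc : HasCompactSupport F)
    (hi : Integrable (vdiv F)) : ∫ x, vdiv F x = 0 := by
  rcases N with _ | n
  · simp [vdiv]
  obtain ⟨T, hT0, hT⟩ := exists_box_of_hasCompactSupport hc
  have hmp := PiLp.volume_preserving_toLp (Fin (n + 1))
  let L : (Fin (n + 1) → ℝ) ≃L[ℝ] EuclideanSpace ℝ (Fin (n + 1)) :=
    (PiLp.continuousLinearEquiv 2 ℝ (fun _ : Fin (n + 1) => ℝ)).symm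
  have hbox : ∫ y in Set.Icc (fun _ => -T) (fun _ => T), vdiv F (L y) = ∫ x, vdiv F x := by
    rw [← hmp.integral_comp (MeasurableEquiv.toLp 2 _).measurableEmbedding]
    refine setIntegral_eq_integral_of_forall_compl_eq_zero fun y hy => ?_
    obtain ⟨i, hi⟩ : ∃ i, T ≤ |y i| := by
      by_contra! h
      exact hy ⟨fun i => (abs_le.1 (h i).le).1, fun i => (abs_le.1 (h i).le).2⟩
    exact vdiv_eq_zero_of_eventuallyEq_zero (hT _ i hi)
  -- The version of the divergence theorem that asks only the divergence to be integrable,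
  -- because the single partial derivatives of `F` need not be.
  have hdiv := integral_divergence_of_hasFDerivAt_off_countable (fun _ : Fin (n + 1) => -T)
    (fun _ => T) (fun _ => by linarith) (fun y => L.symm (F (L y)))
    (fun y => (L.symm : _ →L[ℝ] _).comp ((fderiv ℝ F (L y)).comp (L : _ →L[ℝ] _)))
    ∅ Set.countable_empty
    (L.symm.continuous.comp (hF.continuous.comp L.continuous)).continuousOn
    (fun y _ => L.symm.hasFDerivAt.comp y ((hF (L y)).hasFDerivAt.comp y L.hasFDerivAt))
    (hmp.integrable_comp_of_integrable hi).integrableOn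
  have hface : ∀ i (y : Fin n → ℝ) (s : ℝ), T ≤ |s| →
      L.symm (F (L (i.insertNth (α := fun _ => ℝ) s y))) i = 0 := fun i y s hs => by
    have : F (L (i.insertNth (α := fun _ => ℝ) s y)) = 0 :=
      (hT _ i (by simpa [L] using hs)).eq_of_nhds
    simp [this]
  rw [← hbox]
  refine hdiv.trans (Finset.sum_eq_zero fun i _ => ?_)
  simp only [hface i _ T (le_abs_self T), hface i _ (-T) (abs_neg T ▸ le_abs_self T),
    integral_zero, sub_zero]

end Divergence

/-! ### Truncation and the energy identity -/

/-- A `C¹` truncation of `t` that vanishes for `t ≤ δ` and increases to `t` as `δ → 0⁺`; it cuts a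
positive function with zero boundary values down to compact support. -/
def softThreshold (δ t : ℝ) : ℝ := (max t δ - δ) ^ 2 / max t δ

/-- The derivative of `softThreshold δ`. -/
def softThresholdDeriv (δ t : ℝ) : ℝ := 1 - (δ / max t δ) ^ 2

section SoftThreshold

variable {δ t : ℝ}

lemma softThreshold_of_le (h : t ≤ δ) : softThreshold δ t = 0 := by
  simp [softThreshold, max_eq_right h]

lemma softThresholdDeriv_of_le (hδ : 0 < δ) (h : t ≤ δ) : softThresholdDeriv δ t = 0 := by
  simp [softThresholdDeriv, max_eq_right h, hδ.ne']

lemma softThreshold_nonneg (hδ : 0 < δ) : 0 ≤ softThreshold δ t :=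
  div_nonneg (sq_nonneg _) (hδ.le.trans (le_max_right _ _))

lemma softThreshold_le_self (hδ : 0 < δ) (ht : 0 ≤ t) : softThreshold δ t ≤ t := by
  rcases le_total t δ with h | h
  · rwa [softThreshold_of_le h]
  · rw [softThreshold, max_eq_left h, div_le_iff₀ (hδ.trans_le h)]
    nlinarith

lemma softThresholdDeriv_nonneg (hδ : 0 < δ) : 0 ≤ softThresholdDeriv δ t :=
  sub_nonneg.2 (pow_le_one₀ (div_nonneg hδ.le (hδ.le.trans (le_max_right _ _)))
    ((div_le_one (lt_max_of_lt_right hδ)).2 (le_max_right _ _)))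

lemma softThresholdDeriv_le_one : softThresholdDeriv δ t ≤ 1 :=
  sub_le_self _ (sq_nonneg _)

lemma continuous_softThresholdDeriv (hδ : 0 < δ) : Continuous (softThresholdDeriv δ) := by
  have hmax : ∀ t, max t δ ≠ 0 := fun t => (lt_max_of_lt_right hδ).ne'
  unfold softThresholdDeriv
  fun_prop (disch := exact hmax _)

lemma hasDerivAt_softThreshold (hδ : 0 < δ) (t : ℝ) :
    HasDerivAt (softThreshold δ) (softThresholdDeriv δ t) t := by
  have hleft : t ≤ δ → HasDerivWithinAt (softThreshold δ) (softThresholdDeriv δ t) (Set.Iic δ) t :=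
    fun ht => softThresholdDeriv_of_le hδ ht ▸
      (hasDerivWithinAt_const t _ (0 : ℝ)).congr_of_mem (fun _ => softThreshold_of_le) ht
  have hright : δ ≤ t →
      HasDerivWithinAt (softThreshold δ) (softThresholdDeriv δ t) (Set.Ici δ) t := fun ht => by
    have ht0 : t ≠ 0 := (hδ.trans_le ht).ne'
    have hquot := (((hasDerivAt_id t).sub_const δ).fun_pow 2).fun_div (hasDerivAt_id t) ht0
    refine (hquot.hasDerivWithinAt.congr_deriv ?_).congr_of_mem (s := Set.Ici δ)
      (fun s (hs : δ ≤ s) => by simp [softThreshold, max_eq_left hs]) ht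
    simp only [softThresholdDeriv, max_eq_left ht, id]
    field_simp
    ring
  rcases lt_trichotomy t δ with h | rfl | h
  · exact (hleft h.le).hasDerivAt (Iic_mem_nhds h)
  · have := (hleft le_rfl).union (hright le_rfl)
    rwa [Set.Iic_union_Ici, hasDerivWithinAt_univ] at this
  · exact (hright h.le).hasDerivAt (Ici_mem_nhds h)

lemma contDiff_softThreshold (hδ : 0 < δ) : ContDiff ℝ 1 (softThreshold δ) := by
  rw [contDiff_one_iff_deriv, show deriv (softThreshold δ) = softThresholdDeriv δ from
    funext fun t => (hasDerivAt_softThreshold hδ t).deriv]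
  exact ⟨fun t => (hasDerivAt_softThreshold hδ t).differentiableAt,
    continuous_softThresholdDeriv hδ⟩

lemma tendsto_softThreshold (ht : 0 < t) :
    Tendsto (fun δ => softThreshold δ t) (𝓝[>] 0) (𝓝 t) := by
  have hcont : ContinuousAt (fun δ => softThreshold δ t) 0 := by
    have : max t 0 ≠ 0 := (lt_max_of_lt_left ht).ne'
    unfold softThreshold
    fun_prop (disch := assumption)
  have hzero : softThreshold 0 t = t := by
    simp [softThreshold, max_eq_left ht.le, sq, ht.ne']
  simpa only [hzero] using hcont.tendsto.mono_left nhdsWithin_le_nhds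

lemma tendsto_softThresholdDeriv (ht : 0 < t) :
    Tendsto (fun δ => softThresholdDeriv δ t) (𝓝[>] 0) (𝓝 1) := by
  have hcont : ContinuousAt (fun δ => softThresholdDeriv δ t) 0 := by
    have : max t 0 ≠ 0 := (lt_max_of_lt_left ht).ne'
    unfold softThresholdDeriv
    fun_prop (disch := assumption)
  have hzero : softThresholdDeriv 0 t = 1 := by simp [softThresholdDeriv]
  simpa only [hzero] using hcont.tendsto.mono_left nhdsWithin_le_nhds

end SoftThreshold

lemma integrable_of_tendsto_of_integral_norm_le {α ι F : Type*} [MeasurableSpace α]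
    [NormedAddCommGroup F] {μ : Measure α} {l : Filter ι} [l.NeBot] [l.IsCountablyGenerated]
    {G : ι → α → F} {f : α → F} {C : ℝ} (hG : ∀ᶠ i in l, Integrable (G i) μ)
    (hC : ∀ᶠ i in l, ∫ x, ‖G i x‖ ∂μ ≤ C)
    (hlim : ∀ᵐ x ∂μ, Tendsto (fun i => G i x) l (𝓝 (f x))) : Integrable f μ := by
  obtain ⟨k, hk⟩ := l.exists_seq_tendsto
  obtain ⟨n₀, hn₀⟩ := eventually_atTop.1 (hk.eventually (hG.and hC))
  replace hn₀ := fun n => hn₀ (n + n₀) (Nat.le_add_left _ _)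
  replace hlim : ∀ᵐ x ∂μ, Tendsto (fun n => G (k (n + n₀)) x) atTop (𝓝 (f x)) :=
    hlim.mono fun x hx => hx.comp (hk.comp (tendsto_add_atTop_nat n₀))
  have hbound : ∀ n, ∫⁻ x, ‖G (k (n + n₀)) x‖ₑ ∂μ ≤ ENNReal.ofReal C := fun n => by
    rw [← ofReal_integral_norm_eq_lintegral_enorm (hn₀ n).1]
    exact ENNReal.ofReal_le_ofReal (hn₀ n).2
  refine ⟨aestronglyMeasurable_of_tendsto_ae _ (fun n => (hn₀ n).1.1) hlim, ?_⟩
  calc ∫⁻ x, ‖f x‖ₑ ∂μ = ∫⁻ x, liminf (fun n => ‖G (k (n + n₀)) x‖ₑ) atTop ∂μ :=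
        lintegral_congr_ae (hlim.mono fun x hx => hx.enorm.liminf_eq.symm)
    _ ≤ liminf (fun n => ∫⁻ x, ‖G (k (n + n₀)) x‖ₑ ∂μ) atTop :=
        lintegral_liminf_le' fun n => (hn₀ n).1.1.enorm
    _ ≤ ENNReal.ofReal C := liminf_le_of_frequently_le' (Frequently.of_forall hbound)
    _ < ⊤ := ENNReal.ofReal_lt_top

lemma integrable_of_continuousOn_isCompact {X F : Type*} [TopologicalSpace X] [T2Space X]
    [MeasurableSpace X] [OpensMeasurableSpace X] [NormedAddCommGroup F] {μ : Measure X}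
    [IsFiniteMeasureOnCompacts μ] {K : Set X} {f : X → F} (hK : IsCompact K)
    (hf : ContinuousOn f K) (hzero : ∀ x ∉ K, f x = 0) : Integrable f μ :=
  (hf.integrableOn_compact' hK hK.measurableSet).integrable_of_forall_notMem_eq_zero hzero

section Gradient

variable {F : Type*} [NormedAddCommGroup F] [InnerProductSpace ℝ F]

lemma inner_smul_norm_rpow_smul (g : F) (c : ℝ) {p : ℝ} (hp : p ≠ 0) :
    inner ℝ (c • g) (‖g‖ ^ (p - 2) • g) = c * ‖g‖ ^ p := by
  rcases eq_or_ne g 0 with rfl | hg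
  · simp [Real.zero_rpow hp]
  · rw [real_inner_smul_left, real_inner_smul_right, real_inner_self_eq_norm_sq,
      ← Real.rpow_natCast, ← Real.rpow_add (norm_pos_iff.2 hg)]
    norm_num

variable [CompleteSpace F]

lemma hasGradientAt_comp {f : F → ℝ} {f' : F} {φ : ℝ → ℝ} {φ' : ℝ} {x : F}
    (hφ : HasDerivAt φ φ' (f x)) (hf : HasGradientAt f f' x) :
    HasGradientAt (fun y => φ (f y)) (φ' • f') x := by
  rw [hasGradientAt_iff_hasFDerivAt, map_smulₛₗ, conj_trivial]
  exact hφ.comp_hasFDerivAt x hf.hasFDerivAt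

lemma norm_gradient (f : F → ℝ) (x : F) : ‖gradient f x‖ = ‖fderiv ℝ f x‖ := by
  simp [gradient]

lemma continuousOn_gradient {f : F → ℝ} {s : Set F} (hs : IsOpen s) (hf : ContDiffOn ℝ 1 f s) :
    ContinuousOn (gradient f) s :=
  (LinearIsometryEquiv.continuous _).comp_continuousOn
    (hf.continuousOn_fderiv_of_isOpen hs le_rfl)

end Gradient

/-- `u` is a nonnegative function of class `C¹` up to the boundary of `Ω`, positive in `Ω`, with
zero boundary values; it is extended by `0` to the whole space. -/
structure IsPositiveDirichlet {N : ℕ} (Ω : Set (EuclideanSpace ℝ (Fin N)))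
    (u : EuclideanSpace ℝ (Fin N) → ℝ) : Prop where
  contDiffOn : ContDiffOn ℝ 1 u (closure Ω)
  pos : ∀ x ∈ Ω, 0 < u x
  eq_zero : ∀ x ∉ Ω, u x = 0

/-- The `C¹` analogue of `TestOn`, intermediate between smooth test functions and
`IsPositiveDirichlet` functions. -/
structure IsC1Test {N : ℕ} (Ω : Set (EuclideanSpace ℝ (Fin N)))
    (u : EuclideanSpace ℝ (Fin N) → ℝ) : Prop where
  contDiff : ContDiff ℝ 1 u
  hasCompactSupport : HasCompactSupport u
  tsupport_subset : tsupport u ⊆ Ω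

namespace IsPositiveDirichlet

variable {N : ℕ} {Ω : Set (EuclideanSpace ℝ (Fin N))} {u : EuclideanSpace ℝ (Fin N) → ℝ}
  {δ : ℝ}

lemma continuousOn (hu : IsPositiveDirichlet Ω u) : ContinuousOn u Ω :=
  hu.contDiffOn.continuousOn.mono subset_closure

lemma contDiffAt (hu : IsPositiveDirichlet Ω u) (hΩ : IsOpen Ω) {x : EuclideanSpace ℝ (Fin N)}
    (hx : x ∈ Ω) : ContDiffAt ℝ 1 u x :=
  hu.contDiffOn.contDiffAt (mem_of_superset (hΩ.mem_nhds hx) subset_closure)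

lemma hasGradientAt (hu : IsPositiveDirichlet Ω u) (hΩ : IsOpen Ω)
    {x : EuclideanSpace ℝ (Fin N)} (hx : x ∈ Ω) : HasGradientAt u (gradient u x) x :=
  ((hu.contDiffAt hΩ hx).differentiableAt one_ne_zero).hasGradientAt

lemma continuousOn_norm_gradient_rpow (hu : IsPositiveDirichlet Ω u) (hΩ : IsOpen Ω) {p : ℝ}
    (hp : 0 ≤ p) : ContinuousOn (fun x => ‖gradient u x‖ ^ p) Ω :=
  (continuousOn_gradient hΩ (hu.contDiffOn.mono subset_closure)).norm.rpow_const
    fun _ _ => Or.inr hp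

lemma exists_bound (hu : IsPositiveDirichlet Ω u) (hΩ : Bornology.IsBounded Ω) :
    ∃ B, ∀ x ∈ Ω, ‖u x‖ ≤ B :=
  (hΩ.isCompact_closure.exists_bound_of_continuousOn hu.contDiffOn.continuousOn).imp
    fun _ hB x hx => hB x (subset_closure hx)

lemma exists_isCompact_superlevel (hu : IsPositiveDirichlet Ω u) (hΩ : Bornology.IsBounded Ω)
    (hδ : 0 < δ) : ∃ K ⊆ Ω, IsCompact K ∧ ∀ x ∉ K, u x ≤ δ := by
  refine ⟨closure Ω ∩ u ⁻¹' Set.Ici δ, fun x hx => ?_, ?_, fun x hx => ?_⟩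
  · by_contra hxΩ
    exact hδ.not_ge (hu.eq_zero x hxΩ ▸ hx.2)
  · exact hΩ.isCompact_closure.of_isClosed_subset
      (hu.contDiffOn.continuousOn.preimage_isClosed_of_isClosed isClosed_closure isClosed_Ici)
      Set.inter_subset_left
  · by_cases hxΩ : x ∈ Ω
    · by_contra! h
      exact hx ⟨subset_closure hxΩ, h.le⟩
    · exact (hu.eq_zero x hxΩ).trans_le hδ.le

lemma hasGradientAt_softThreshold (hu : IsPositiveDirichlet Ω u) (hΩ : IsOpen Ω) (hδ : 0 < δ)
    {x : EuclideanSpace ℝ (Fin N)} (hx : x ∈ Ω) :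
    HasGradientAt (fun y => softThreshold δ (u y))
      (softThresholdDeriv δ (u x) • gradient u x) x :=
  hasGradientAt_comp (hasDerivAt_softThreshold hδ (u x)) (hu.hasGradientAt hΩ hx)

lemma isC1Test_softThreshold (hu : IsPositiveDirichlet Ω u) (hΩ : IsOpen Ω)
    (hΩb : Bornology.IsBounded Ω) (hδ : 0 < δ) :
    IsC1Test Ω fun x => softThreshold δ (u x) := by
  obtain ⟨K, hKΩ, hK, hKδ⟩ := hu.exists_isCompact_superlevel hΩb hδ
  have hsupp : tsupport (fun x => softThreshold δ (u x)) ⊆ K :=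
    closure_minimal (Function.support_subset_iff'.2 fun x hx => softThreshold_of_le (hKδ x hx))
      hK.isClosed
  refine ⟨contMDiff_iff_contDiff.1 (contMDiff_of_tsupport fun x hx => ?_),
    hK.of_isClosed_subset (isClosed_tsupport _) hsupp, hsupp.trans hKΩ⟩
  exact ((contDiff_softThreshold hδ).contDiffAt.comp x
    (hu.contDiffAt hΩ (hKΩ (hsupp hx)))).contMDiffAt

end IsPositiveDirichlet

/-- The vector field `|∇u|^{p-2} ∇u`, whose divergence is `Δ_p u`. -/
def pFlux {N : ℕ} (p : ℝ) (u : EuclideanSpace ℝ (Fin N) → ℝ) (x : EuclideanSpace ℝ (Fin N)) :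
    EuclideanSpace ℝ (Fin N) :=
  ‖gradient u x‖ ^ (p - 2) • gradient u x

-- `fderiv` takes the value `0` where the flux is not differentiable, so a nonzero `pLap` certifies
-- differentiability.
lemma differentiableAt_pFlux {N : ℕ} {p : ℝ} {u : EuclideanSpace ℝ (Fin N) → ℝ}
    {x : EuclideanSpace ℝ (Fin N)} (h : pLap p u x ≠ 0) : DifferentiableAt ℝ (pFlux p u) x := by
  by_contra hd
  exact h (show vdiv (pFlux p u) x = 0 by simp [vdiv, fderiv_zero_of_not_differentiableAt hd])

namespace IsPositiveDirichlet

variable {N : ℕ} {Ω : Set (EuclideanSpace ℝ (Fin N))} {u g : EuclideanSpace ℝ (Fin N) → ℝ}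
  {p δ : ℝ}

lemma eventuallyEq_zero_softThreshold_smul_pFlux {x : EuclideanSpace ℝ (Fin N)}
    (hx : x ∉ tsupport fun y => softThreshold δ (u y)) :
    (fun y => softThreshold δ (u y) • pFlux p u y) =ᶠ[𝓝 x] 0 :=
  (notMem_tsupport_iff_eventuallyEq.1 hx).mono fun y hy => by
    simp only [hy, Pi.zero_apply, zero_smul]

lemma differentiable_softThreshold_smul_pFlux (hu : IsPositiveDirichlet Ω u) (hΩ : IsOpen Ω)
    (hΩb : Bornology.IsBounded Ω) (hδ : 0 < δ) (hlap : ∀ x ∈ Ω, pLap p u x ≠ 0) :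
    Differentiable ℝ fun y => softThreshold δ (u y) • pFlux p u y := fun x => by
  by_cases hx : x ∈ tsupport fun y => softThreshold δ (u y)
  · have hxΩ := (hu.isC1Test_softThreshold hΩ hΩb hδ).tsupport_subset hx
    exact (hu.hasGradientAt_softThreshold hΩ hδ hxΩ).differentiableAt.smul
      (differentiableAt_pFlux (hlap x hxΩ))
  · exact (differentiableAt_const 0).congr_of_eventuallyEq
      (eventuallyEq_zero_softThreshold_smul_pFlux hx)

lemma vdiv_softThreshold_smul_pFlux (hu : IsPositiveDirichlet Ω u) (hΩ : IsOpen Ω)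
    (hΩb : Bornology.IsBounded Ω) (hp : p ≠ 0) (hδ : 0 < δ) (hlap : ∀ x ∈ Ω, pLap p u x ≠ 0)
    (x : EuclideanSpace ℝ (Fin N)) :
    vdiv (fun y => softThreshold δ (u y) • pFlux p u y) x =
      softThresholdDeriv δ (u x) * ‖gradient u x‖ ^ p + softThreshold δ (u x) * pLap p u x := by
  by_cases hx : x ∈ Ω
  · rw [vdiv_smul (hu.hasGradientAt_softThreshold hΩ hδ hx) (differentiableAt_pFlux (hlap x hx)),
      pFlux, inner_smul_norm_rpow_smul _ _ hp]
    rfl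
  · have hux : u x ≤ δ := (hu.eq_zero x hx).trans_le hδ.le
    rw [vdiv_eq_zero_of_eventuallyEq_zero (eventuallyEq_zero_softThreshold_smul_pFlux
      fun h => hx ((hu.isC1Test_softThreshold hΩ hΩb hδ).tsupport_subset h)),
      softThreshold_of_le hux, softThresholdDeriv_of_le hδ hux, zero_mul, zero_mul, add_zero]

lemma truncated_energy_identity (hu : IsPositiveDirichlet Ω u) (hΩ : IsOpen Ω)
    (hΩb : Bornology.IsBounded Ω) (hp : 0 < p) (hg : ContinuousOn g Ω) (hgpos : ∀ x ∈ Ω, 0 < g x)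
    (hsol : ∀ x ∈ Ω, -pLap p u x = g x) (hδ : 0 < δ) :
    IntegrableOn (fun x => softThresholdDeriv δ (u x) * ‖gradient u x‖ ^ p) Ω ∧
    ∫ x in Ω, softThresholdDeriv δ (u x) * ‖gradient u x‖ ^ p =
      ∫ x in Ω, g x * softThreshold δ (u x) := by
  obtain ⟨K, hKΩ, hK, hKδ⟩ := hu.exists_isCompact_superlevel hΩb hδ
  have hlap : ∀ x ∈ Ω, pLap p u x ≠ 0 := fun x hx => by linarith [hsol x hx, hgpos x hx]
  have hzero₁ : ∀ x ∉ K, softThresholdDeriv δ (u x) * ‖gradient u x‖ ^ p = 0 := fun x hx => by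
    rw [softThresholdDeriv_of_le hδ (hKδ x hx), zero_mul]
  have hzero₂ : ∀ x ∉ K, g x * softThreshold δ (u x) = 0 := fun x hx => by
    rw [softThreshold_of_le (hKδ x hx), mul_zero]
  have hint₁ : Integrable fun x => softThresholdDeriv δ (u x) * ‖gradient u x‖ ^ p :=
    integrable_of_continuousOn_isCompact hK
      ((((continuous_softThresholdDeriv hδ).comp_continuousOn hu.continuousOn).mul
        (hu.continuousOn_norm_gradient_rpow hΩ hp.le)).mono hKΩ) hzero₁
  have hint₂ : Integrable fun x => g x * softThreshold δ (u x) :=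
    integrable_of_continuousOn_isCompact hK
      ((hg.mul ((contDiff_softThreshold hδ).continuous.comp_continuousOn hu.continuousOn)).mono
        hKΩ) hzero₂
  have hdiv : vdiv (fun y => softThreshold δ (u y) • pFlux p u y) = fun x =>
      softThresholdDeriv δ (u x) * ‖gradient u x‖ ^ p - g x * softThreshold δ (u x) := by
    funext x
    rw [hu.vdiv_softThreshold_smul_pFlux hΩ hΩb hp.ne' hδ hlap]
    by_cases hx : x ∈ Ω
    · rw [← hsol x hx]
      ring
    · rw [hzero₂ x (hx <| hKΩ ·), softThreshold_of_le (hKδ x (hx <| hKΩ ·))]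
      ring
  have hzero := integral_vdiv_eq_zero (hu.differentiable_softThreshold_smul_pFlux hΩ hΩb hδ hlap)
    (hu.isC1Test_softThreshold hΩ hΩb hδ).hasCompactSupport.smul_right (hdiv ▸ hint₁.sub hint₂)
  rw [hdiv, integral_sub hint₁ hint₂, sub_eq_zero] at hzero
  refine ⟨hint₁.integrableOn, ?_⟩
  rwa [setIntegral_eq_integral_of_forall_compl_eq_zero fun x hx => hzero₁ x (hx <| hKΩ ·),
    setIntegral_eq_integral_of_forall_compl_eq_zero fun x hx => hzero₂ x (hx <| hKΩ ·)]

lemma tendsto_setIntegral_mul_softThreshold (hu : IsPositiveDirichlet Ω u) (hΩ : MeasurableSet Ω)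
    (hg : ContinuousOn g Ω) (hgu : IntegrableOn (fun x => g x * u x) Ω) :
    Tendsto (fun δ => ∫ x in Ω, g x * softThreshold δ (u x)) (𝓝[>] 0)
      (𝓝 (∫ x in Ω, g x * u x)) := by
  have hpos : ∀ᶠ δ : ℝ in 𝓝[>] 0, 0 < δ := self_mem_nhdsWithin
  have hΩae : ∀ᵐ x ∂volume.restrict Ω, x ∈ Ω := ae_restrict_mem hΩ
  refine tendsto_integral_filter_of_dominated_convergence _ (hpos.mono fun δ hδ =>
    (hg.mul ((contDiff_softThreshold hδ).continuous.comp_continuousOn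
      hu.continuousOn)).aestronglyMeasurable hΩ)
    (hpos.mono fun δ hδ => hΩae.mono fun x hx => ?_) hgu.norm
    (hΩae.mono fun x hx => (tendsto_softThreshold (hu.pos x hx)).const_mul (g x))
  rw [norm_mul, norm_mul, Real.norm_of_nonneg (softThreshold_nonneg hδ),
    Real.norm_of_nonneg (hu.pos x hx).le]
  gcongr
  exact softThreshold_le_self hδ (hu.pos x hx).le

lemma tendsto_softThresholdDeriv_mul (hu : IsPositiveDirichlet Ω u) (hΩ : MeasurableSet Ω)
    (f : EuclideanSpace ℝ (Fin N) → ℝ) : ∀ᵐ x ∂volume.restrict Ω,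
      Tendsto (fun δ => softThresholdDeriv δ (u x) * f x) (𝓝[>] 0) (𝓝 (f x)) :=
  (ae_restrict_mem hΩ).mono fun x hx => by
    simpa only [one_mul] using (tendsto_softThresholdDeriv (hu.pos x hx)).mul_const (f x)

lemma integrableOn_norm_gradient_rpow (hu : IsPositiveDirichlet Ω u) (hΩ : IsOpen Ω)
    (hΩb : Bornology.IsBounded Ω) (hp : 0 < p) (hg : ContinuousOn g Ω) (hgpos : ∀ x ∈ Ω, 0 < g x)
    (hsol : ∀ x ∈ Ω, -pLap p u x = g x) (hgu : IntegrableOn (fun x => g x * u x) Ω) :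
    IntegrableOn (fun x => ‖gradient u x‖ ^ p) Ω := by
  have hpos : ∀ᶠ δ : ℝ in 𝓝[>] 0, 0 < δ := self_mem_nhdsWithin
  have htrunc := fun δ (hδ : 0 < δ) => hu.truncated_energy_identity hΩ hΩb hp hg hgpos hsol hδ
  have hΩae : ∀ᵐ x ∂volume.restrict Ω, x ∈ Ω := ae_restrict_mem hΩ.measurableSet
  refine integrable_of_tendsto_of_integral_norm_le (C := ∫ x in Ω, g x * u x)
    (hpos.mono fun δ hδ => (htrunc δ hδ).1) (hpos.mono fun δ hδ => ?_)
    (hu.tendsto_softThresholdDeriv_mul hΩ.measurableSet _)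
  have hnorm : ∀ x, ‖softThresholdDeriv δ (u x) * ‖gradient u x‖ ^ p‖ =
      softThresholdDeriv δ (u x) * ‖gradient u x‖ ^ p := fun x =>
    Real.norm_of_nonneg (mul_nonneg (softThresholdDeriv_nonneg hδ) (by positivity))
  simp only [hnorm, (htrunc δ hδ).2]
  refine integral_mono_of_nonneg
    (hΩae.mono fun x hx => mul_nonneg (hgpos x hx).le (softThreshold_nonneg hδ)) hgu
    (hΩae.mono fun x hx => ?_)
  exact mul_le_mul_of_nonneg_left (softThreshold_le_self hδ (hu.pos x hx).le) (hgpos x hx).le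

lemma energy_identity (hu : IsPositiveDirichlet Ω u) (hΩ : IsOpen Ω) (hΩb : Bornology.IsBounded Ω)
    (hp : 0 < p) (hg : ContinuousOn g Ω) (hgpos : ∀ x ∈ Ω, 0 < g x)
    (hsol : ∀ x ∈ Ω, -pLap p u x = g x) (hgu : IntegrableOn (fun x => g x * u x) Ω) :
    ∫ x in Ω, ‖gradient u x‖ ^ p = ∫ x in Ω, g x * u x := by
  have hpos : ∀ᶠ δ : ℝ in 𝓝[>] 0, 0 < δ := self_mem_nhdsWithin
  have htrunc := fun δ (hδ : 0 < δ) => hu.truncated_energy_identity hΩ hΩb hp hg hgpos hsol hδ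
  have hgrad : Tendsto (fun δ => ∫ x in Ω, softThresholdDeriv δ (u x) * ‖gradient u x‖ ^ p)
      (𝓝[>] 0) (𝓝 (∫ x in Ω, ‖gradient u x‖ ^ p)) := by
    refine tendsto_integral_filter_of_dominated_convergence _
      (hpos.mono fun δ hδ => (htrunc δ hδ).1.1) (hpos.mono fun δ hδ => .of_forall fun x => ?_)
      (hu.integrableOn_norm_gradient_rpow hΩ hΩb hp hg hgpos hsol hgu)
      (hu.tendsto_softThresholdDeriv_mul hΩ.measurableSet _)
    rw [Real.norm_of_nonneg (mul_nonneg (softThresholdDeriv_nonneg hδ) (by positivity))]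
    exact mul_le_of_le_one_left (by positivity) softThresholdDeriv_le_one
  refine tendsto_nhds_unique hgrad ?_
  exact (hu.tendsto_setIntegral_mul_softThreshold hΩ.measurableSet hg hgu).congr'
    (hpos.mono fun δ hδ => (htrunc δ hδ).2.symm)

end IsPositiveDirichlet

/-! ### Approximation of the Rayleigh quotient by test functions -/

section Mollification

open Metric ContinuousLinearMap
open scoped Convolution

lemma exists_contDiffBump_seq_tendsto_zero {G : Type*} [NormedAddCommGroup G] {r : ℝ} (hr : 0 < r) :
    ∃ φ : ℕ → ContDiffBump (0 : G), (∀ k, (φ k).rOut ≤ r) ∧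
      Tendsto (fun k => (φ k).rOut) atTop (𝓝 0) := by
  have hpos : ∀ k : ℕ, 0 < r / (k + 1) := fun k => by positivity
  refine ⟨fun k => ⟨r / (k + 1) / 2, r / (k + 1), half_pos (hpos k), half_lt_self (hpos k)⟩,
    fun k => div_le_self hr.le (by simp), ?_⟩
  simpa [div_eq_mul_inv] using (tendsto_one_div_add_atTop_nhds_zero_nat (𝕜 := ℝ)).const_mul r

variable {G F : Type*} [NormedAddCommGroup G] [NormedSpace ℝ G] [FiniteDimensional ℝ G]
  [HasContDiffBump G] [MeasurableSpace G] [BorelSpace G] {μ : Measure G} [μ.IsAddHaarMeasure]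
  [NormedAddCommGroup F] [NormedSpace ℝ F] {φ : ContDiffBump (0 : G)} {u : G → F}

lemma norm_normed_convolution_le [CompleteSpace F] {B : ℝ} (hu : Continuous u)
    (hB : ∀ x, ‖u x‖ ≤ B) (x : G) : ‖(φ.normed μ ⋆[lsmul ℝ ℝ, μ] u) x‖ ≤ B := by
  rw [← dist_zero_right]
  exact dist_convolution_le ((norm_nonneg _).trans (hB 0)) φ.support_normed_eq.subset
    φ.nonneg_normed φ.integral_normed hu.aestronglyMeasurable
    fun y _ => (dist_zero_right (u y)).trans_le (hB y)

lemma tsupport_normed_convolution_subset {r : ℝ} (hr : φ.rOut ≤ r) :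
    tsupport (φ.normed μ ⋆[lsmul ℝ ℝ, μ] u) ⊆ cthickening r (tsupport u) := by
  refine closure_minimal ((support_convolution_subset _).trans ?_) isClosed_cthickening
  rw [φ.support_normed_eq]
  rintro _ ⟨a, ha, b, hb, rfl⟩
  refine mem_cthickening_of_dist_le _ b _ _ (subset_tsupport u hb) ?_
  simpa using (mem_ball_zero_iff.1 ha).le.trans hr

end Mollification

/-- The critical Sobolev exponent `p^* = Np/(N-p)`. -/
def sobolevExp (N : ℕ) (p : ℝ) : ℝ := (N : ℝ) * p / ((N : ℝ) - p)

lemma lt_sobolevExp {N : ℕ} {p : ℝ} (hp : 0 < p) (hpN : p < N) : p < sobolevExp N p := by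
  rw [sobolevExp, lt_div_iff₀ (sub_pos.2 hpN)]
  nlinarith

lemma setIntegral_abs_rpow_le {α : Type*} [MeasurableSpace α] {μ : Measure α} [IsFiniteMeasure μ]
    {u : α → ℝ} {p q : ℝ} (hp : 0 < p) (hpq : p < q) (hu : MemLp u (ENNReal.ofReal q) μ) :
    ∫ x, |u x| ^ p ∂μ ≤ (∫ x, |u x| ^ q ∂μ) ^ (p / q) * μ.real Set.univ ^ (1 - p / q) := by
  have hconj : (q / p).HolderConjugate (1 - p / q)⁻¹ := by
    rw [Real.holderConjugate_iff, inv_inv, inv_div]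
    exact ⟨(one_lt_div hp).2 hpq, by ring⟩
  have hmem : MemLp (fun x => |u x| ^ p) (ENNReal.ofReal (q / p)) μ := by
    simpa [ENNReal.ofReal_div_of_pos hp, ENNReal.toReal_ofReal hp.le] using
      hu.norm_rpow_div (ENNReal.ofReal p)
  have := integral_mul_le_Lp_mul_Lq_of_nonneg hconj (.of_forall fun x => by positivity)
    (.of_forall fun _ => zero_le_one) hmem (memLp_const 1)
  simpa [← Real.rpow_mul (abs_nonneg _), mul_div_cancel₀ _ hp.ne'] using this

section Rayleigh

variable {N : ℕ} {Ω : Set (EuclideanSpace ℝ (Fin N))} {p lam : ℝ}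
  {u : EuclideanSpace ℝ (Fin N) → ℝ}

lemma neg_le_Qfun (hp : 0 < p) (hpN : p < N)
    (hΩb : Bornology.IsBounded Ω)
    (hu : MemLp u (ENNReal.ofReal (sobolevExp N p)) (volume.restrict Ω)) :
    -(|lam| * volume.real Ω ^ (1 - p / sobolevExp N p)) ≤ Qfun Ω p lam u := by
  have : IsFiniteMeasure (volume.restrict Ω) := ⟨by simpa using hΩb.measure_lt_top⟩
  have hholder := setIntegral_abs_rpow_le hp (lt_sobolevExp hp hpN) hu
  rw [measureReal_restrict_apply_univ] at hholder
  set D := (∫ x in Ω, |u x| ^ sobolevExp N p) ^ (p / sobolevExp N p)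
  have hD0 : 0 ≤ D := by positivity
  have hgrad : 0 ≤ ∫ x in Ω, ‖gradient u x‖ ^ p := by positivity
  have hnonneg : 0 ≤ ∫ x in Ω, |u x| ^ p := by positivity
  change _ ≤ (_ - _) / D
  rcases hD0.eq_or_lt with h0 | hpos
  · rw [← h0, div_zero, neg_nonpos]
    positivity
  · rw [le_div_iff₀ hpos]
    nlinarith [le_abs_self lam, mul_le_mul_of_nonneg_left hholder (abs_nonneg lam)]

lemma IsC1Test.exists_seq_testOn (hu : IsC1Test Ω u) (hΩ : IsOpen Ω) :
    ∃ (v : ℕ → EuclideanSpace ℝ (Fin N) → ℝ) (B : ℝ), (∀ k, TestOn Ω (v k)) ∧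
      (∀ k x, |v k x| ≤ B) ∧ (∀ k x, ‖gradient (v k) x‖ ≤ B) ∧
      (∀ x, Tendsto (fun k => v k x) atTop (𝓝 (u x))) ∧
      ∀ x, Tendsto (fun k => gradient (v k) x) atTop (𝓝 (gradient u x)) := by
  have hcont := hu.contDiff.continuous
  have hfderiv := hu.contDiff.continuous_fderiv one_ne_zero
  obtain ⟨r, hr, hrΩ⟩ :=
    hu.hasCompactSupport.isCompact.exists_cthickening_subset_open hΩ hu.tsupport_subset
  obtain ⟨φ, hφr, hφ⟩ := exists_contDiffBump_seq_tendsto_zero (G := EuclideanSpace ℝ (Fin N)) hr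
  obtain ⟨B₀, hB₀⟩ := hu.hasCompactSupport.exists_bound_of_continuous hcont
  obtain ⟨B₁, hB₁⟩ := (hu.hasCompactSupport.fderiv (𝕜 := ℝ)).exists_bound_of_continuous hfderiv
  set v := fun k => convolution ((φ k).normed volume) u (ContinuousLinearMap.lsmul ℝ ℝ) volume
  have hv : ∀ k x, fderiv ℝ (v k) x = convolution ((φ k).normed volume) (fderiv ℝ u)
      (ContinuousLinearMap.lsmul ℝ ℝ) volume x := fun k x =>
    (hu.hasCompactSupport.hasFDerivAt_convolution_right _
      (φ k).continuous_normed.locallyIntegrable hu.contDiff x).fderiv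
  have hsupp : ∀ k, tsupport (v k) ⊆ Metric.cthickening r (tsupport u) :=
    fun k => tsupport_normed_convolution_subset (hφr k)
  refine ⟨v, max B₀ B₁, fun k => ⟨?_, ?_, (hsupp k).trans hrΩ⟩, fun k x => ?_, fun k x => ?_,
    ContDiffBump.convolution_tendsto_right_of_continuous hφ hcont, fun x => ?_⟩
  · exact (φ k).hasCompactSupport_normed.contDiff_convolution_left _ (φ k).contDiff_normed
      hcont.locallyIntegrable
  · exact hu.hasCompactSupport.isCompact.cthickening.of_isClosed_subset (isClosed_tsupport _)
      (hsupp k)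
  · exact (norm_normed_convolution_le hcont hB₀ x).trans (le_max_left _ _)
  · rw [norm_gradient, hv]
    exact (norm_normed_convolution_le hfderiv hB₁ x).trans (le_max_right _ _)
  · refine ((LinearIsometryEquiv.continuous _).tendsto _).comp ?_
    simpa only [hv] using ContDiffBump.convolution_tendsto_right_of_continuous hφ hfderiv x

lemma tendsto_setIntegral_abs_rpow {ι X : Type*} [TopologicalSpace X] [MeasurableSpace X]
    [OpensMeasurableSpace X] {μ : Measure X} {A : Set X} {l : Filter ι} [l.IsCountablyGenerated]
    {w : ι → X → ℝ} {f : X → ℝ} {s B : ℝ} (hA : MeasurableSet A) (hμA : μ A ≠ ⊤) (hs : 0 ≤ s)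
    (hw : ∀ᶠ i in l, ContinuousOn (w i) A) (hB : ∀ᶠ i in l, ∀ x ∈ A, |w i x| ≤ B)
    (hlim : ∀ x ∈ A, Tendsto (fun i => w i x) l (𝓝 (f x))) :
    Tendsto (fun i => ∫ x in A, |w i x| ^ s ∂μ) l (𝓝 (∫ x in A, |f x| ^ s ∂μ)) := by
  have hAae : ∀ᵐ x ∂μ.restrict A, x ∈ A := ae_restrict_mem hA
  refine tendsto_integral_filter_of_dominated_convergence (fun _ => B ^ s)
    (hw.mono fun i hi => (hi.abs.rpow_const fun _ _ => Or.inr hs).aestronglyMeasurable hA)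
    (hB.mono fun i hi => hAae.mono fun x hx => ?_) (integrableOn_const hμA)
    (hAae.mono fun x hx => (hlim x hx).abs.rpow_const (Or.inr hs))
  rw [Real.norm_of_nonneg (by positivity)]
  exact Real.rpow_le_rpow (abs_nonneg _) (hi x hx) hs

lemma tendsto_Qfun {ι : Type*} {l : Filter ι} [l.IsCountablyGenerated] (hp : 0 < p) (hpN : p < N)
    (hΩ : IsOpen Ω) (hΩb : Bornology.IsBounded Ω) {w : ι → EuclideanSpace ℝ (Fin N) → ℝ} {B : ℝ}
    {G : EuclideanSpace ℝ (Fin N) → ℝ} (hw : ∀ᶠ i in l, ContDiffOn ℝ 1 (w i) Ω)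
    (hB : ∀ᶠ i in l, ∀ x ∈ Ω, |w i x| ≤ B)
    (hG : ∀ᶠ i in l, ∀ x ∈ Ω, ‖gradient (w i) x‖ ^ p ≤ G x) (hGi : IntegrableOn G Ω)
    (hlim : ∀ x ∈ Ω, Tendsto (fun i => w i x) l (𝓝 (u x)))
    (hgrad : ∀ x ∈ Ω, Tendsto (fun i => gradient (w i) x) l (𝓝 (gradient u x)))
    (hne : ∫ x in Ω, |u x| ^ sobolevExp N p ≠ 0) :
    Tendsto (fun i => Qfun Ω p lam (w i)) l (𝓝 (Qfun Ω p lam u)) ∧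
      ∀ᶠ i in l, ∫ x in Ω, |w i x| ^ sobolevExp N p ≠ 0 := by
  have hpow : ∀ s : ℝ, 0 < s →
      Tendsto (fun i => ∫ x in Ω, |w i x| ^ s) l (𝓝 (∫ x in Ω, |u x| ^ s)) :=
    fun s hs => tendsto_setIntegral_abs_rpow hΩ.measurableSet hΩb.measure_lt_top.ne hs.le
      (hw.mono fun i hi => hi.continuousOn) hB hlim
  have hΩae : ∀ᵐ x ∂volume.restrict Ω, x ∈ Ω := ae_restrict_mem hΩ.measurableSet
  have hgradpow : Tendsto (fun i => ∫ x in Ω, ‖gradient (w i) x‖ ^ p) l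
      (𝓝 (∫ x in Ω, ‖gradient u x‖ ^ p)) := by
    refine tendsto_integral_filter_of_dominated_convergence G
      (hw.mono fun i hi => ((continuousOn_gradient hΩ hi).norm.rpow_const
        fun _ _ => Or.inr hp.le).aestronglyMeasurable hΩ.measurableSet)
      (hG.mono fun i hi => hΩae.mono fun x hx => ?_) hGi
      (hΩae.mono fun x hx => (hgrad x hx).norm.rpow_const (Or.inr hp.le))
    rw [Real.norm_of_nonneg (by positivity)]
    exact hi x hx
  have hden := hpow _ (hp.trans (lt_sobolevExp hp hpN))
  refine ⟨(hgradpow.sub ((hpow p hp).const_mul lam)).div (hden.rpow_const (Or.inl hne)) ?_,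
    hden.eventually_ne hne⟩
  exact (Real.rpow_pos_of_pos ((by positivity : 0 ≤ ∫ x in Ω, |u x| ^ sobolevExp N p).lt_of_ne'
    hne) _).ne'

lemma Sfun_le_Qfun_of_testOn (hp : 0 < p) (hpN : p < N) (hΩb : Bornology.IsBounded Ω)
    (hu : TestOn Ω u) (hne : ∫ x in Ω, |u x| ^ sobolevExp N p ≠ 0) :
    Sfun Ω p lam ≤ Qfun Ω p lam u := by
  refine csInf_le ⟨-(|lam| * volume.real Ω ^ (1 - p / sobolevExp N p)), ?_⟩ ⟨u, hu, ?_, rfl⟩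
  · rintro _ ⟨v, hv, -, rfl⟩
    exact neg_le_Qfun hp hpN hΩb
      ((hv.1.continuous.memLp_of_hasCompactSupport hv.2.1).restrict Ω)
  · rintro rfl
    simp [Real.zero_rpow (hp.trans (lt_sobolevExp hp hpN)).ne'] at hne

lemma Sfun_le_Qfun_of_isC1Test (hp : 0 < p) (hpN : p < N) (hΩ : IsOpen Ω)
    (hΩb : Bornology.IsBounded Ω) (hu : IsC1Test Ω u)
    (hne : ∫ x in Ω, |u x| ^ sobolevExp N p ≠ 0) : Sfun Ω p lam ≤ Qfun Ω p lam u := by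
  obtain ⟨v, B, hv, hvB, hgB, hlim, hgrad⟩ := hu.exists_seq_testOn hΩ
  obtain ⟨hQ, hv0⟩ := tendsto_Qfun (lam := lam) (l := atTop) hp hpN hΩ hΩb
    (.of_forall fun k => ((hv k).1.of_le (by exact_mod_cast le_top)).contDiffOn)
    (.of_forall fun k x _ => hvB k x)
    (.of_forall fun k x _ => Real.rpow_le_rpow (norm_nonneg _) (hgB k x) hp.le)
    (integrableOn_const hΩb.measure_lt_top.ne) (fun x _ => hlim x) (fun x _ => hgrad x) hne
  exact ge_of_tendsto hQ (hv0.mono fun k hk => Sfun_le_Qfun_of_testOn hp hpN hΩb (hv k) hk)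

lemma IsPositiveDirichlet.Sfun_le_Qfun (hu : IsPositiveDirichlet Ω u) (hp : 0 < p) (hpN : p < N)
    (hΩ : IsOpen Ω) (hΩb : Bornology.IsBounded Ω)
    (hgrad : IntegrableOn (fun x => ‖gradient u x‖ ^ p) Ω)
    (hne : ∫ x in Ω, |u x| ^ sobolevExp N p ≠ 0) : Sfun Ω p lam ≤ Qfun Ω p lam u := by
  have hpos : ∀ᶠ δ : ℝ in 𝓝[>] 0, 0 < δ := self_mem_nhdsWithin
  obtain ⟨B, hB⟩ := hu.exists_bound hΩb
  have htest := fun δ (hδ : 0 < δ) => hu.isC1Test_softThreshold hΩ hΩb hδ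
  have hgrad_eq := fun δ (hδ : 0 < δ) x (hx : x ∈ Ω) =>
    (hu.hasGradientAt_softThreshold hΩ hδ hx).gradient
  have hbound : ∀ δ > 0, ∀ x ∈ Ω, |softThreshold δ (u x)| ≤ B := fun δ hδ x hx => by
    rw [abs_of_nonneg (softThreshold_nonneg hδ)]
    exact (softThreshold_le_self hδ (hu.pos x hx).le).trans ((le_abs_self _).trans (hB x hx))
  have hgrad_le : ∀ δ > 0, ∀ x ∈ Ω,
      ‖gradient (fun y => softThreshold δ (u y)) x‖ ^ p ≤ ‖gradient u x‖ ^ p := fun δ hδ x hx => by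
    rw [hgrad_eq δ hδ x hx, norm_smul, Real.norm_of_nonneg (softThresholdDeriv_nonneg hδ)]
    exact Real.rpow_le_rpow (mul_nonneg (softThresholdDeriv_nonneg hδ) (norm_nonneg _))
      (mul_le_of_le_one_left (norm_nonneg _) softThresholdDeriv_le_one) hp.le
  have hgrad_lim : ∀ x ∈ Ω, Tendsto (fun δ => gradient (fun y => softThreshold δ (u y)) x)
      (𝓝[>] 0) (𝓝 (gradient u x)) := fun x hx => by
    refine Tendsto.congr' (hpos.mono fun δ hδ => (hgrad_eq δ hδ x hx).symm) ?_
    simpa only [one_smul] using (tendsto_softThresholdDeriv (hu.pos x hx)).smul_const (gradient u x)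
  obtain ⟨hQ, hne'⟩ := tendsto_Qfun (lam := lam) hp hpN hΩ hΩb
    (hpos.mono fun δ hδ => (htest δ hδ).contDiff.contDiffOn) (hpos.mono hbound)
    (hpos.mono hgrad_le) hgrad (fun x hx => tendsto_softThreshold (hu.pos x hx)) hgrad_lim hne
  exact ge_of_tendsto hQ ((hpos.and hne').mono fun δ hδ =>
    Sfun_le_Qfun_of_isC1Test hp hpN hΩ hΩb (htest δ hδ.1) hδ.2)

end Rayleigh

/-! ### Scaling and concentration of bubbles -/

section Homothety

variable {V F : Type*} [NormedAddCommGroup V] [NormedSpace ℝ V] [FiniteDimensional ℝ V]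
  [MeasurableSpace V] [BorelSpace V] [NormedAddCommGroup F]
  (μ : Measure V) [μ.IsAddHaarMeasure]

lemma integral_comp_homothety [NormedSpace ℝ F] (f : V → F) (x₀ : V) (R : ℝ) :
    ∫ y, f (AffineMap.homothety x₀ R y) ∂μ =
      |(R ^ Module.finrank ℝ V)⁻¹| • ∫ y, f y ∂μ := by
  simp only [AffineMap.homothety_apply, vsub_eq_sub, vadd_eq_add]
  rw [integral_sub_right_eq_self (fun z => f (R • z + x₀)) x₀,
    Measure.integral_comp_smul μ (fun w => f (w + x₀)) R, integral_add_right_eq_self]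

lemma integrable_of_comp_homothety {f : V → F} {x₀ : V} {R : ℝ} (hR : R ≠ 0)
    (hf : Integrable (fun y => f (AffineMap.homothety x₀ R y)) μ) : Integrable f μ := by
  have hsmul : Integrable (fun z => f (R • z + x₀)) μ := by
    simpa [AffineMap.homothety_apply] using hf.comp_add_right x₀
  simpa using
    ((integrable_comp_smul_iff μ (fun w => f (w + x₀)) hR).1 hsmul).comp_sub_right x₀

end Homothety

section Bubble

variable {N : ℕ} {p ε s : ℝ} {x₀ : EuclideanSpace ℝ (Fin N)}

lemma Cone_pos (hp : 1 < p) (hpN : p < N) : 0 < Cone N p := by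
  have : 0 < ((N : ℝ) - p) / (p - 1) := div_pos (sub_pos.2 hpN) (sub_pos.2 hp)
  have hN : (0 : ℝ) < N := by linarith
  unfold Cone
  positivity

lemma Czero_pos (hp : 1 < p) (hpN : p < N) : 0 < Czero N p := by
  have : 0 < (p - 1) / ((N : ℝ) - p) := div_pos (sub_pos.2 hp) (sub_pos.2 hpN)
  have hN : (0 : ℝ) < N := by linarith
  have hball : 0 < (volume (Metric.ball (0 : EuclideanSpace ℝ (Fin N)) 1)).toReal :=
    ENNReal.toReal_pos (Metric.measure_ball_pos _ _ one_pos).ne' measure_ball_lt_top.ne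
  unfold Czero
  positivity

lemma bubble_eq_Cone_mul (p ε : ℝ) (x₀ x : EuclideanSpace ℝ (Fin N)) :
    bubble p ε x₀ x =
      Cone N p * (ε / (ε ^ p + ‖x - x₀‖ ^ (p / (p - 1)))) ^ (((N : ℝ) - p) / p) := rfl

lemma bubble_pos (hp : 1 < p) (hpN : p < N) (hε : 0 < ε) (x₀ x : EuclideanSpace ℝ (Fin N)) :
    0 < bubble p ε x₀ x := by
  rw [bubble_eq_Cone_mul]
  have := Cone_pos hp hpN
  positivity

lemma continuous_bubble (hp : 1 < p) (hε : 0 < ε) (x₀ : EuclideanSpace ℝ (Fin N)) :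
    Continuous (bubble p ε x₀) := by
  have hden : ∀ x, 0 < ε ^ p + ‖x - x₀‖ ^ (p / (p - 1)) := fun x => by positivity
  have hr : 0 ≤ p / (p - 1) := div_nonneg (zero_lt_one.trans hp).le (sub_pos.2 hp).le
  refine continuous_const.mul ((continuous_const.div (continuous_const.add
    ((continuous_id.sub continuous_const).norm.rpow_const fun _ => Or.inr hr))
    fun x => (hden x).ne').rpow_const fun x => Or.inl (div_pos hε (hden x)).ne')

lemma continuous_bubble_rpow (hp : 1 < p) (hpN : p < N) (hε : 0 < ε)
    (x₀ : EuclideanSpace ℝ (Fin N)) (s : ℝ) : Continuous fun x => bubble p ε x₀ x ^ s :=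
  (continuous_bubble hp hε x₀).rpow_const fun x => Or.inl (bubble_pos hp hpN hε x₀ x).ne'

lemma bubble_le_of_le_norm_sub (hp : 1 < p) (hpN : p < N) (hε : 0 < ε) {r : ℝ} (hr : 0 < r)
    {x : EuclideanSpace ℝ (Fin N)} (hx : r ≤ ‖x - x₀‖) :
    bubble p ε x₀ x ≤
      Cone N p * (1 / r ^ (p / (p - 1))) ^ (((N : ℝ) - p) / p) * ε ^ (((N : ℝ) - p) / p) := by
  have hC := Cone_pos hp hpN
  have : 0 ≤ ((N : ℝ) - p) / p := div_nonneg (sub_pos.2 hpN).le (zero_lt_one.trans hp).le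
  have hexp : 0 ≤ p / (p - 1) := div_nonneg (zero_lt_one.trans hp).le (sub_pos.2 hp).le
  rw [bubble_eq_Cone_mul, mul_assoc, ← Real.mul_rpow (by positivity) hε.le, one_div_mul_eq_div]
  gcongr
  have : r ^ (p / (p - 1)) ≤ ‖x - x₀‖ ^ (p / (p - 1)) := Real.rpow_le_rpow hr.le hx hexp
  exact this.trans (le_add_of_nonneg_left (by positivity))

lemma bubble_homothety (hp : 1 < p) (hε : 0 < ε) (x₀ y : EuclideanSpace ℝ (Fin N)) :
    bubble p ε x₀ (AffineMap.homothety x₀ (ε ^ (p - 1)) y) =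
      ε ^ (-((p - 1) * (((N : ℝ) - p) / p))) * bubble p 1 x₀ y := by
  have hnorm : ‖AffineMap.homothety x₀ (ε ^ (p - 1)) y - x₀‖ ^ (p / (p - 1)) =
      ε ^ p * ‖y - x₀‖ ^ (p / (p - 1)) := by
    rw [AffineMap.homothety_apply, vsub_eq_sub, vadd_eq_add, add_sub_cancel_right, norm_smul,
      Real.norm_of_nonneg (by positivity), Real.mul_rpow (by positivity) (norm_nonneg _),
      ← Real.rpow_mul hε.le, mul_div_cancel₀ _ (sub_pos.2 hp).ne']
  have hratio : ε / (ε ^ p + ε ^ p * ‖y - x₀‖ ^ (p / (p - 1))) =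
      ε ^ (-(p - 1)) * (1 / (1 + ‖y - x₀‖ ^ (p / (p - 1)))) := by
    rw [neg_sub, Real.rpow_sub hε, Real.rpow_one]
    field_simp
  rw [bubble_eq_Cone_mul, bubble_eq_Cone_mul, hnorm, hratio, Real.one_rpow,
    Real.mul_rpow (by positivity) (by positivity), ← Real.rpow_mul hε.le, neg_mul]
  ring

lemma bubble_one_le (hp : 1 < p) (hpN : p < N) (x₀ y : EuclideanSpace ℝ (Fin N)) :
    bubble p 1 x₀ y ≤ Cone N p * (2 ^ (p / (p - 1) - 1)) ^ (((N : ℝ) - p) / p) *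
      (1 + ‖y - x₀‖) ^ (-(((N : ℝ) - p) / (p - 1))) := by
  have hC := Cone_pos hp hpN
  have hp0 : 0 < p := zero_lt_one.trans hp
  have : 0 ≤ ((N : ℝ) - p) / p := div_nonneg (sub_pos.2 hpN).le hp0.le
  have hr : 1 ≤ p / (p - 1) := (one_le_div (sub_pos.2 hp)).2 (sub_le_self p zero_le_one)
  have hconvex : (1 + ‖y - x₀‖) ^ (p / (p - 1)) ≤
      2 ^ (p / (p - 1) - 1) * (1 + ‖y - x₀‖ ^ (p / (p - 1))) := by
    simpa using NNReal.coe_le_coe.2 (NNReal.rpow_add_le_mul_rpow_add_rpow 1 ‖y - x₀‖₊ hr)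
  have hexp : (1 + ‖y - x₀‖) ^ (-(((N : ℝ) - p) / (p - 1))) =
      (1 / (1 + ‖y - x₀‖) ^ (p / (p - 1))) ^ (((N : ℝ) - p) / p) := by
    rw [one_div, ← Real.rpow_neg (by positivity), ← Real.rpow_mul (by positivity), neg_mul,
      div_mul_div_cancel₀' hp0.ne']
  rw [bubble_eq_Cone_mul, Real.one_rpow, hexp, mul_assoc,
    ← Real.mul_rpow (by positivity) (by positivity)]
  gcongr
  rwa [mul_one_div, div_le_div_iff₀ (by positivity) (by positivity), one_mul]

lemma integrable_bubble_one_rpow (hp : 1 < p) (hpN : p < N)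
    (hs : (N : ℝ) < s * (((N : ℝ) - p) / (p - 1))) (x₀ : EuclideanSpace ℝ (Fin N)) :
    Integrable fun y => bubble p 1 x₀ y ^ s := by
  have hC := Cone_pos hp hpN
  have hb : 0 < ((N : ℝ) - p) / (p - 1) := div_pos (sub_pos.2 hpN) (sub_pos.2 hp)
  have hs0 : 0 ≤ s := (pos_of_mul_pos_left ((Nat.cast_nonneg N).trans_lt hs) hb.le).le
  have hdecay : Integrable fun y : EuclideanSpace ℝ (Fin N) =>
      (1 + ‖y - x₀‖) ^ (-(s * (((N : ℝ) - p) / (p - 1)))) :=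
    (integrable_one_add_norm (by simpa using hs)).comp_sub_right x₀
  refine (hdecay.const_mul ((Cone N p * (2 ^ (p / (p - 1) - 1)) ^ (((N : ℝ) - p) / p)) ^ s)).mono'
    (continuous_bubble_rpow hp hpN one_pos x₀ s).aestronglyMeasurable (.of_forall fun y => ?_)
  have hpos := (bubble_pos hp hpN one_pos x₀ y).le
  rw [Real.norm_of_nonneg (Real.rpow_nonneg hpos s), mul_comm s, ← neg_mul,
    Real.rpow_mul (by positivity), ← Real.mul_rpow (by positivity) (by positivity)]
  exact Real.rpow_le_rpow hpos (bubble_one_le hp hpN x₀ y) hs0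

lemma bubble_homothety_rpow (hp : 1 < p) (hpN : p < N) (hε : 0 < ε) (s : ℝ)
    (x₀ y : EuclideanSpace ℝ (Fin N)) :
    bubble p ε x₀ (AffineMap.homothety x₀ (ε ^ (p - 1)) y) ^ s =
      ε ^ (-((p - 1) * (s * (((N : ℝ) - p) / p)))) * bubble p 1 x₀ y ^ s := by
  rw [bubble_homothety hp hε, Real.mul_rpow (by positivity) (bubble_pos hp hpN one_pos _ _).le,
    ← Real.rpow_mul hε.le]
  ring_nf

lemma integrable_bubble_rpow (hp : 1 < p) (hpN : p < N) (hε : 0 < ε)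
    (hs : (N : ℝ) < s * (((N : ℝ) - p) / (p - 1))) (x₀ : EuclideanSpace ℝ (Fin N)) :
    Integrable fun x => bubble p ε x₀ x ^ s := by
  refine integrable_of_comp_homothety (x₀ := x₀) (R := ε ^ (p - 1)) volume (by positivity) ?_
  simpa only [bubble_homothety_rpow hp hpN hε] using
    (integrable_bubble_one_rpow hp hpN hs x₀).const_mul _

lemma integral_bubble_rpow_mul (hp : 1 < p) (hpN : p < N) (hε : 0 < ε) (s : ℝ)
    (x₀ : EuclideanSpace ℝ (Fin N)) (ψ : EuclideanSpace ℝ (Fin N) → ℝ) :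
    ∫ x, bubble p ε x₀ x ^ s * ψ x = ε ^ ((p - 1) * (N - s * (((N : ℝ) - p) / p))) *
      ∫ y, bubble p 1 x₀ y ^ s * ψ (AffineMap.homothety x₀ (ε ^ (p - 1)) y) := by
  have hchange := integral_comp_homothety volume (fun x => bubble p ε x₀ x ^ s * ψ x) x₀
    (ε ^ (p - 1))
  have hjac : (ε ^ (p - 1)) ^ Module.finrank ℝ (EuclideanSpace ℝ (Fin N)) =
      ε ^ ((p - 1) * N) := by
    rw [finrank_euclideanSpace_fin, ← Real.rpow_natCast, ← Real.rpow_mul hε.le]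
  simp only [bubble_homothety_rpow hp hpN hε, mul_assoc, integral_const_mul] at hchange
  rw [hjac, abs_of_pos (by positivity), smul_eq_mul, eq_inv_mul_iff_mul_eq₀ (by positivity),
    ← mul_assoc, ← Real.rpow_add hε] at hchange
  rw [← hchange]
  ring_nf

lemma integral_bubble_one_rpow_pos (hp : 1 < p) (hpN : p < N)
    (hs : (N : ℝ) < s * (((N : ℝ) - p) / (p - 1))) (x₀ : EuclideanSpace ℝ (Fin N)) :
    0 < ∫ y, bubble p 1 x₀ y ^ s := by
  have hpos : ∀ y, 0 < bubble p 1 x₀ y ^ s := fun y =>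
    Real.rpow_pos_of_pos (bubble_pos hp hpN one_pos x₀ y) s
  exact integral_pos_of_integrable_nonneg_nonzero (x := x₀)
    (continuous_bubble_rpow hp hpN one_pos x₀ s) (integrable_bubble_one_rpow hp hpN hs x₀)
    (fun y => (hpos y).le) (hpos x₀).ne'

end Bubble

lemma tendsto_rpow_nhdsGT_zero {r : ℝ} (hr : 0 < r) :
    Tendsto (fun ε : ℝ => ε ^ r) (𝓝[>] 0) (𝓝 0) :=
  ((Real.continuous_rpow_const hr.le).tendsto' 0 0 (Real.zero_rpow hr.ne')).mono_left
    nhdsWithin_le_nhds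

section Concentration

variable {N : ℕ} {p s : ℝ} {x₀ : EuclideanSpace ℝ (Fin N)} {A : Set (EuclideanSpace ℝ (Fin N))}

lemma tendsto_homothety_rpow (hp : 1 < p) (x₀ y : EuclideanSpace ℝ (Fin N)) :
    Tendsto (fun ε : ℝ => AffineMap.homothety x₀ (ε ^ (p - 1)) y) (𝓝[>] 0) (𝓝 x₀) := by
  have hscale : Tendsto (fun ε : ℝ => ε ^ (p - 1)) (𝓝[>] 0) (𝓝 0) :=
    tendsto_rpow_nhdsGT_zero (sub_pos.2 hp)
  simpa [AffineMap.homothety_apply] using (hscale.smul_const (y - x₀)).add_const x₀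

lemma tendsto_integral_bubble_rpow_mul_homothety (hp : 1 < p) (hpN : p < N)
    (hs : (N : ℝ) < s * (((N : ℝ) - p) / (p - 1)))
    {ψ : ℝ → EuclideanSpace ℝ (Fin N) → ℝ} {M L : ℝ}
    (hψ : ∀ᶠ ε in 𝓝[>] 0, Measurable (ψ ε)) (hM : ∀ᶠ ε in 𝓝[>] 0, ∀ x, |ψ ε x| ≤ M)
    (hL : Tendsto (Function.uncurry ψ) (𝓝[>] 0 ×ˢ 𝓝 x₀) (𝓝 L)) :
    Tendsto (fun ε : ℝ => ∫ y, bubble p 1 x₀ y ^ s *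
      ψ ε (AffineMap.homothety x₀ (ε ^ (p - 1)) y)) (𝓝[>] 0)
      (𝓝 ((∫ y, bubble p 1 x₀ y ^ s) * L)) := by
  have hint := integrable_bubble_one_rpow hp hpN hs x₀
  rw [← integral_mul_const]
  refine tendsto_integral_filter_of_dominated_convergence (fun y => bubble p 1 x₀ y ^ s * M)
    (hψ.mono fun ε hε => hint.aestronglyMeasurable.mul
      (hε.comp (AffineMap.homothety_continuous x₀ _).measurable).aestronglyMeasurable)
    (hM.mono fun ε hε => .of_forall fun y => ?_) (hint.mul_const M) (.of_forall fun y => ?_)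
  · have hpos := Real.rpow_nonneg (bubble_pos hp hpN one_pos x₀ y).le s
    rw [norm_mul, Real.norm_of_nonneg hpos]
    exact mul_le_mul_of_nonneg_left (hε _) hpos
  · exact (hL.comp (tendsto_id.prodMk (tendsto_homothety_rpow hp x₀ y))).const_mul _

lemma tendsto_setIntegral_bubble_rpow_mul (hp : 1 < p) (hpN : p < N)
    (hs : (N : ℝ) < s * (((N : ℝ) - p) / (p - 1))) (hA : MeasurableSet A) (hx₀ : A ∈ 𝓝 x₀)
    {ψ : ℝ → EuclideanSpace ℝ (Fin N) → ℝ} {M L : ℝ}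
    (hψ : ∀ᶠ ε in 𝓝[>] 0, ContinuousOn (ψ ε) A) (hM : ∀ᶠ ε in 𝓝[>] 0, ∀ x ∈ A, |ψ ε x| ≤ M)
    (hL : Tendsto (Function.uncurry ψ) (𝓝[>] 0 ×ˢ 𝓝 x₀) (𝓝 L)) :
    Tendsto (fun ε : ℝ => (∫ x in A, bubble p ε x₀ x ^ s * ψ ε x) /
      ε ^ ((p - 1) * (N - s * (((N : ℝ) - p) / p)))) (𝓝[>] 0)
      (𝓝 ((∫ y, bubble p 1 x₀ y ^ s) * L)) := by
  have hmeas : ∀ᶠ ε in 𝓝[>] 0, Measurable (A.indicator (ψ ε)) := hψ.mono fun ε hε => by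
    classical
    rw [← Set.piecewise_eq_indicator]
    exact hε.measurable_piecewise continuousOn_const hA
  have hbound : ∀ᶠ ε in 𝓝[>] 0, ∀ x, |A.indicator (ψ ε) x| ≤ |M| := hM.mono fun ε hε x => by
    by_cases hx : x ∈ A
    · simpa [hx] using (hε x hx).trans (le_abs_self M)
    · simp [hx]
  have hlim : Tendsto (Function.uncurry fun ε => A.indicator (ψ ε)) (𝓝[>] 0 ×ˢ 𝓝 x₀) (𝓝 L) :=
    hL.congr' ((tendsto_snd.eventually hx₀).mono fun z hz => (Set.indicator_of_mem hz _).symm)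
  refine (tendsto_integral_bubble_rpow_mul_homothety hp hpN hs hmeas hbound hlim).congr' ?_
  filter_upwards [self_mem_nhdsWithin] with ε hε
  replace hε : 0 < ε := hε
  rw [eq_div_iff (by positivity), mul_comm, ← integral_bubble_rpow_mul hp hpN hε,
    ← integral_indicator hA]
  simp only [Set.indicator_mul_right]

lemma tendsto_setIntegral_bubble_rpow (hp : 1 < p) (hpN : p < N)
    (hs : (N : ℝ) < s * (((N : ℝ) - p) / (p - 1))) (hA : MeasurableSet A) (hx₀ : A ∈ 𝓝 x₀) :
    Tendsto (fun ε : ℝ => (∫ x in A, bubble p ε x₀ x ^ s) /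
      ε ^ ((p - 1) * (N - s * (((N : ℝ) - p) / p)))) (𝓝[>] 0)
      (𝓝 (∫ y, bubble p 1 x₀ y ^ s)) := by
  simpa using tendsto_setIntegral_bubble_rpow_mul hp hpN hs hA hx₀ (ψ := fun _ _ => 1) (M := 1)
    (L := 1) (.of_forall fun _ => continuousOn_const) (.of_forall fun _ _ _ => by simp)
    tendsto_const_nhds

lemma tendsto_setIntegral_compl_bubble_rpow (hp : 1 < p) (hpN : p < N)
    (hs : (N : ℝ) < s * (((N : ℝ) - p) / (p - 1))) (hA : MeasurableSet A) (hx₀ : A ∈ 𝓝 x₀) :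
    Tendsto (fun ε : ℝ => (∫ x in Aᶜ, bubble p ε x₀ x ^ s) /
      ε ^ ((p - 1) * (N - s * (((N : ℝ) - p) / p)))) (𝓝[>] 0) (𝓝 0) := by
  have h := (tendsto_setIntegral_bubble_rpow (x₀ := x₀) hp hpN hs MeasurableSet.univ
    univ_mem).sub (tendsto_setIntegral_bubble_rpow hp hpN hs hA hx₀)
  rw [sub_self] at h
  refine h.congr' ?_
  filter_upwards [self_mem_nhdsWithin] with ε hε
  rw [← sub_div, setIntegral_univ,
    ← integral_add_compl hA (integrable_bubble_rpow hp hpN hε hs x₀), add_sub_cancel_left]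

lemma tendsto_setIntegral_compl_bubble_rpow_add_one (hp : 1 < p) (hpN : p < N)
    (hs : (N : ℝ) < s * (((N : ℝ) - p) / (p - 1))) (hA : MeasurableSet A) (hx₀ : A ∈ 𝓝 x₀) :
    Tendsto (fun ε : ℝ => (∫ x in Aᶜ, bubble p ε x₀ x ^ (s + 1)) /
      (ε ^ ((p - 1) * (N - s * (((N : ℝ) - p) / p))) * ε ^ (((N : ℝ) - p) / p)))
      (𝓝[>] 0) (𝓝 0) := by
  obtain ⟨r, hr, hball⟩ := Metric.mem_nhds_iff.1 hx₀
  set K := Cone N p * (1 / r ^ (p / (p - 1))) ^ (((N : ℝ) - p) / p)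
  have htail := (tendsto_setIntegral_compl_bubble_rpow hp hpN hs hA hx₀).const_mul K
  rw [mul_zero] at htail
  have hnonneg : ∀ ε > 0, ∀ x, 0 ≤ bubble p ε x₀ x ^ (s + 1) := fun ε hε x =>
    Real.rpow_nonneg (bubble_pos hp hpN hε x₀ x).le _
  refine squeeze_zero' ?_ ?_ htail <;> filter_upwards [self_mem_nhdsWithin] with ε hε
  all_goals replace hε : 0 < ε := hε
  · have := setIntegral_nonneg (μ := volume) hA.compl fun x _ => hnonneg ε hε x
    positivity
  · have hfar : ∀ x ∈ Aᶜ, bubble p ε x₀ x ≤ K * ε ^ (((N : ℝ) - p) / p) := fun x hx =>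
      bubble_le_of_le_norm_sub hp hpN hε hr
        (not_lt.1 fun h => hx (hball (mem_ball_iff_norm.2 h)))
    have hint : ∫ x in Aᶜ, bubble p ε x₀ x ^ (s + 1) ≤
        ∫ x in Aᶜ, K * ε ^ (((N : ℝ) - p) / p) * bubble p ε x₀ x ^ s := by
      refine integral_mono_of_nonneg (.of_forall (hnonneg ε hε))
        ((integrable_bubble_rpow hp hpN hε hs x₀).const_mul _).integrableOn
        ((ae_restrict_mem hA.compl).mono fun x hx => ?_)
      have hpos := bubble_pos hp hpN hε x₀ x
      simp only [Real.rpow_add_one hpos.ne', mul_comm (_ ^ s)]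
      exact mul_le_mul_of_nonneg_right (hfar x hx) (Real.rpow_nonneg hpos.le s)
    rw [integral_const_mul] at hint
    rw [div_le_iff₀ (by positivity)]
    refine hint.trans_eq ?_
    field_simp

end Concentration

/-! ### First order expansion of powers -/

lemma rpow_add_mul_sub_le_rpow {x y s : ℝ} (hx : 0 < x) (hy : 0 < y) (hs : 1 ≤ s) :
    y ^ s + s * y ^ (s - 1) * (x - y) ≤ x ^ s := by
  have hbernoulli := one_add_mul_self_le_rpow_one_add (s := x / y - 1) (by
    linarith [div_pos hx hy]) hs
  rw [add_sub_cancel, Real.div_rpow hx.le hy.le, le_div_iff₀ (by positivity)] at hbernoulli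
  refine Eq.trans_le ?_ hbernoulli
  rw [Real.rpow_sub_one hy.ne']
  field_simp

lemma abs_rpow_sub_rpow_le_of_le_one {x y r : ℝ} (hx : 0 ≤ x) (hy : 0 ≤ y) (hr0 : 0 ≤ r)
    (hr1 : r ≤ 1) : |x ^ r - y ^ r| ≤ |x - y| ^ r := by
  wlog hyx : y ≤ x generalizing x y
  · rw [abs_sub_comm, abs_sub_comm x]
    exact this hy hx (le_of_not_ge hyx)
  rw [abs_of_nonneg (sub_nonneg.2 hyx),
    abs_of_nonneg (sub_nonneg.2 (Real.rpow_le_rpow hy hyx hr0)), sub_le_iff_le_add]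
  simpa using Real.rpow_add_le_add_rpow (sub_nonneg.2 hyx) hy hr0 hr1

lemma abs_rpow_sub_rpow_le {x y r : ℝ} (hx : 0 < x) (hy : 0 < y) (hr : 1 ≤ r) :
    |x ^ r - y ^ r| ≤ r * (y + |x - y|) ^ (r - 1) * |x - y| := by
  have hmono : ∀ z, 0 < z → z ≤ y + |x - y| →
      r * z ^ (r - 1) * |x - y| ≤ r * (y + |x - y|) ^ (r - 1) * |x - y| := fun z hz hzle => by
    have := sub_nonneg.2 hr
    gcongr
  have hxle := hmono x hx (by linarith [le_abs_self (x - y)])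
  have hyle := hmono y hy (by linarith [abs_nonneg (x - y)])
  have hxc : 0 ≤ r * x ^ (r - 1) := by positivity
  have hyc : 0 ≤ r * y ^ (r - 1) := by positivity
  rw [abs_le]
  constructor
  · nlinarith [rpow_add_mul_sub_le_rpow hx hy hr, neg_abs_le (x - y)]
  · nlinarith [rpow_add_mul_sub_le_rpow hy hx hr, le_abs_self (x - y)]

lemma exists_abs_rpow_sub_rpow_le {r θ : ℝ} (hr : 0 < r) (hθ0 : 0 ≤ θ) (hθ1 : θ ≤ 1) :
    ∃ C, 0 ≤ C ∧ ∀ x y : ℝ, 0 < x → 0 < y →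
      |x ^ r - y ^ r| ≤ C * (y ^ (r - θ) * |x - y| ^ θ + |x - y| ^ r) := by
  rcases le_total r 1 with hr1 | hr1
  · refine ⟨1, zero_le_one, fun x y hx hy => ?_⟩
    rw [one_mul]
    exact (abs_rpow_sub_rpow_le_of_le_one hx.le hy.le hr.le hr1).trans
      (le_add_of_nonneg_left (by positivity))
  refine ⟨r * 2 ^ (r - 1), by positivity, fun x y hx hy => ?_⟩
  refine (abs_rpow_sub_rpow_le hx hy hr1).trans ?_
  set w := |x - y|
  have hw : 0 ≤ w := abs_nonneg _
  have := sub_nonneg.2 hr1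
  rw [mul_assoc, mul_assoc]
  refine mul_le_mul_of_nonneg_left ?_ (zero_le_one.trans hr1)
  rcases le_total y w with hyw | hwy
  · calc (y + w) ^ (r - 1) * w ≤ (2 * w) ^ (r - 1) * w := by
          gcongr
          linarith
      _ = 2 ^ (r - 1) * w ^ r := by
        rw [Real.mul_rpow zero_le_two hw, mul_assoc, ← Real.rpow_add_one' hw (by linarith),
          sub_add_cancel]
      _ ≤ 2 ^ (r - 1) * (y ^ (r - θ) * w ^ θ + w ^ r) := by
        gcongr
        exact le_add_of_nonneg_left (by positivity)
  · calc (y + w) ^ (r - 1) * w ≤ (2 * y) ^ (r - 1) * (w ^ (1 - θ) * w ^ θ) := by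
          rw [← Real.rpow_add_of_nonneg hw (sub_nonneg.2 hθ1) hθ0, sub_add_cancel, Real.rpow_one]
          gcongr
          linarith
      _ ≤ (2 * y) ^ (r - 1) * (y ^ (1 - θ) * w ^ θ) := by gcongr
      _ = 2 ^ (r - 1) * (y ^ (r - θ) * w ^ θ) := by
        rw [Real.mul_rpow zero_le_two hy.le, mul_assoc, ← mul_assoc (y ^ _), ← Real.rpow_add hy,
          sub_add_sub_cancel]
      _ ≤ 2 ^ (r - 1) * (y ^ (r - θ) * w ^ θ + w ^ r) := by
        gcongr
        exact le_add_of_nonneg_right (by positivity)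

lemma exists_abs_rpow_sub_tangent_le {q θ : ℝ} (hq : 1 < q) (hθ0 : 0 ≤ θ) (hθ1 : θ ≤ 1) :
    ∃ C, 0 ≤ C ∧ ∀ x y : ℝ, 0 < x → 0 < y →
      |x ^ q - y ^ q - q * y ^ (q - 1) * (x - y)| ≤
        C * (y ^ (q - 1 - θ) * |x - y| ^ (1 + θ) + |x - y| ^ q) := by
  obtain ⟨C, hC, hle⟩ := exists_abs_rpow_sub_rpow_le (sub_pos.2 hq) hθ0 hθ1
  refine ⟨q * C, by positivity, fun x y hx hy => ?_⟩
  have hw := abs_nonneg (x - y)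
  calc |x ^ q - y ^ q - q * y ^ (q - 1) * (x - y)|
      ≤ q * ((x ^ (q - 1) - y ^ (q - 1)) * (x - y)) := by
        rw [abs_of_nonneg (by linarith [rpow_add_mul_sub_le_rpow hx hy hq.le])]
        linarith [rpow_add_mul_sub_le_rpow hy hx hq.le]
    _ ≤ q * (|x ^ (q - 1) - y ^ (q - 1)| * |x - y|) := by
        rw [← abs_mul]
        gcongr
        exact le_abs_self _
    _ ≤ q * (C * (y ^ (q - 1 - θ) * |x - y| ^ θ + |x - y| ^ (q - 1)) * |x - y|) := by
        gcongr
        exact hle x y hx hy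
    _ = _ := by
        rw [Real.rpow_one_add' hw (by linarith), ← sub_add_cancel q 1,
          Real.rpow_add_one' hw (by linarith), sub_add_cancel]
        ring

section Exponents

variable {N : ℕ} {p θ : ℝ}

lemma sobolevExp_mul_div (hp : 0 < p) (hpN : p < N) :
    sobolevExp N p * (((N : ℝ) - p) / p) = N := by
  have := (sub_pos.2 hpN).ne'
  rw [sobolevExp]
  field_simp

lemma one_sub_div_sobolevExp (hp : 0 < p) (hpN : p < N) : 1 - p / sobolevExp N p = p / N := by
  have := (hp.trans hpN).ne'
  rw [sobolevExp]
  field_simp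
  ring

lemma lt_sobolevExp_sub_mul (hp : 1 < p) (hpN : p < N) (hθ : θ * ((N : ℝ) - p) < p) :
    (N : ℝ) < (sobolevExp N p - 1 - θ) * (((N : ℝ) - p) / (p - 1)) := by
  have hNp := sub_pos.2 hpN
  have hexp : (sobolevExp N p - 1 - θ) * ((N : ℝ) - p) = N * (p - 1) + (p - θ * (N - p)) := by
    rw [sobolevExp]
    field_simp
    ring
  rw [← mul_div_assoc, hexp, lt_div_iff₀ (sub_pos.2 hp)]
  linarith

lemma lt_sobolevExp_sub_one_mul (hp : 1 < p) (hpN : p < N) :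
    (N : ℝ) < (sobolevExp N p - 1) * (((N : ℝ) - p) / (p - 1)) := by
  simpa using lt_sobolevExp_sub_mul (θ := 0) hp hpN (by linarith)

lemma lt_sobolevExp_mul (hp : 1 < p) (hpN : p < N) :
    (N : ℝ) < sobolevExp N p * (((N : ℝ) - p) / (p - 1)) := by
  simpa using lt_sobolevExp_sub_mul (θ := -1) hp hpN (by linarith)

lemma sub_one_mul_sub_sobolevExp (hp : 0 < p) (hpN : p < N) (θ : ℝ) :
    (p - 1) * (N - (sobolevExp N p - 1 - θ) * (((N : ℝ) - p) / p)) =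
      (N - p) * (1 + θ) - (N - p) / p * (1 + θ) := by
  have hexp : (sobolevExp N p - 1 - θ) * (((N : ℝ) - p) / p) = N - (1 + θ) * ((N - p) / p) := by
    linear_combination sobolevExp_mul_div hp hpN
  rw [hexp]
  field_simp
  ring

lemma sub_one_mul_sub_sobolevExp_sub_one (hp : 0 < p) (hpN : p < N) :
    (p - 1) * (N - (sobolevExp N p - 1) * (((N : ℝ) - p) / p)) = N - p - (N - p) / p := by
  simpa using sub_one_mul_sub_sobolevExp hp hpN 0

end Exponents

section UniformLimit

variable {ι α : Type*} {l : Filter ι} {s : Set α}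

lemma exists_eventually_bound_of_tendstoUniformlyOn {F : Type*} [SeminormedAddCommGroup F]
    [l.NeBot] {f : ι → α → F} {g : α → F} (h : TendstoUniformlyOn f g l s)
    (hf : ∀ᶠ i in l, ∃ B, ∀ x ∈ s, ‖f i x‖ ≤ B) : ∃ M, ∀ᶠ i in l, ∀ x ∈ s, ‖f i x‖ ≤ M := by
  have hdist := Metric.tendstoUniformlyOn_iff.1 h 1 one_pos
  obtain ⟨j, hj, B, hB⟩ := (hdist.and hf).exists
  refine ⟨1 + (1 + B), hdist.mono fun i hi x hx => ?_⟩
  calc ‖f i x‖ ≤ ‖f i x - g x‖ + (‖g x - f j x‖ + ‖f j x‖) :=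
        (norm_le_norm_sub_add _ (g x)).trans
          (add_le_add_right (norm_le_norm_sub_add (g x) (f j x)) _)
    _ ≤ 1 + (1 + B) := by
        gcongr
        · exact (dist_eq_norm' (g x) (f i x) ▸ hi x hx).le
        · exact (dist_eq_norm (g x) (f j x) ▸ hj x hx).le
        · exact hB x hx

lemma tendsto_uncurry_of_tendstoUniformlyOn {β : Type*} [TopologicalSpace α] [UniformSpace β]
    {f : ι → α → β} {g : α → β} {x₀ : α} (h : TendstoUniformlyOn f g l s) (hs : s ∈ 𝓝 x₀)
    (hg : ContinuousAt g x₀) : Tendsto (Function.uncurry f) (l ×ˢ 𝓝 x₀) (𝓝 (g x₀)) :=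
  Uniform.tendsto_nhds_right.2 <|
    (Uniform.tendsto_nhds_right.1 (hg.tendsto.comp tendsto_snd)).uniformity_trans
      ((tendstoUniformlyOn_iff_tendsto.1 h).mono_left (prod_mono le_rfl (le_principal_iff.2 hs)))

end UniformLimit

lemma integrableOn_of_continuousOn_closure {X F : Type*} [PseudoMetricSpace X] [ProperSpace X]
    [MeasurableSpace X] [OpensMeasurableSpace X] [NormedAddCommGroup F] {μ : Measure X}
    [IsFiniteMeasureOnCompacts μ] {A : Set X} {f : X → F} (hA : Bornology.IsBounded A)
    (hf : ContinuousOn f (closure A)) : IntegrableOn f A μ :=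
  (hf.integrableOn_compact' hA.isCompact_closure isClosed_closure.measurableSet).mono_set
    subset_closure

/-! ### Expansion of the energy of projected bubbles -/

lemma exists_abs_setIntegral_rpow_sub_tangent_le {α : Type*} [MeasurableSpace α] {μ : Measure α}
    {A : Set α} (hA : MeasurableSet A) (hμ : μ A ≠ ⊤) {q θ : ℝ} (hq : 1 < q) (hθ0 : 0 ≤ θ)
    (hθ1 : θ ≤ 1) :
    ∃ C, ∀ (f g : α → ℝ) (m : ℝ), (∀ x ∈ A, 0 < f x) → (∀ x ∈ A, 0 < g x) →
      (∀ x ∈ A, |f x - g x| ≤ m) → IntegrableOn (fun x => g x ^ (q - 1 - θ)) A μ →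
      |∫ x in A, (f x ^ q - g x ^ q - q * g x ^ (q - 1) * (f x - g x)) ∂μ| ≤
        C * ((∫ x in A, g x ^ (q - 1 - θ) ∂μ) * m ^ (1 + θ) + μ.real A * m ^ q) := by
  obtain ⟨C, hC, hle⟩ := exists_abs_rpow_sub_tangent_le hq hθ0 hθ1
  refine ⟨C, fun f g m hf hg hm hint => ?_⟩
  have hconst : IntegrableOn (fun _ => m ^ q) A μ := integrableOn_const hμ
  have hbound : ∀ x ∈ A, ‖f x ^ q - g x ^ q - q * g x ^ (q - 1) * (f x - g x)‖ ≤
      C * (g x ^ (q - 1 - θ) * m ^ (1 + θ) + m ^ q) := fun x hx => by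
    have hpow := Real.rpow_nonneg (hg x hx).le (q - 1 - θ)
    refine (hle _ _ (hf x hx) (hg x hx)).trans ?_
    gcongr <;> exact hm x hx
  refine (norm_integral_le_of_norm_le (((hint.mul_const _).add hconst).const_mul C)
    ((ae_restrict_mem hA).mono hbound)).trans_eq ?_
  rw [integral_const_mul, Pi.add_def, integral_add (hint.mul_const _) hconst, integral_mul_const,
    setIntegral_const, smul_eq_mul]

section CriticalMass

variable {N : ℕ} {p : ℝ} {x₀ : EuclideanSpace ℝ (Fin N)}

lemma integrable_bubble_rpow_sobolevExp (hp : 1 < p) (hpN : p < N) {ε : ℝ} (hε : 0 < ε)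
    (x₀ : EuclideanSpace ℝ (Fin N)) : Integrable fun x => bubble p ε x₀ x ^ sobolevExp N p :=
  integrable_bubble_rpow hp hpN hε (lt_sobolevExp_mul hp hpN) x₀

lemma integral_bubble_rpow_sobolevExp (hp : 1 < p) (hpN : p < N) {ε : ℝ} (hε : 0 < ε)
    (x₀ : EuclideanSpace ℝ (Fin N)) :
    ∫ x, bubble p ε x₀ x ^ sobolevExp N p = ∫ x, bubble p 1 x₀ x ^ sobolevExp N p := by
  simpa [sobolevExp_mul_div (one_pos.trans hp) hpN] using
    integral_bubble_rpow_mul hp hpN hε (sobolevExp N p) x₀ fun _ => 1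

lemma integral_bubble_rpow_sobolevExp_pos (hp : 1 < p) (hpN : p < N)
    (x₀ : EuclideanSpace ℝ (Fin N)) : 0 < ∫ x, bubble p 1 x₀ x ^ sobolevExp N p :=
  integral_bubble_one_rpow_pos hp hpN (lt_sobolevExp_mul hp hpN) x₀

lemma integral_bubble_rpow_sobolevExp_sub_one_pos (hp : 1 < p) (hpN : p < N)
    (x₀ : EuclideanSpace ℝ (Fin N)) : 0 < ∫ x, bubble p 1 x₀ x ^ (sobolevExp N p - 1) :=
  integral_bubble_one_rpow_pos hp hpN (lt_sobolevExp_sub_one_mul hp hpN) x₀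

lemma tendsto_setIntegral_bubble_rpow_sobolevExp_sub (hp : 1 < p) (hpN : p < N)
    {A : Set (EuclideanSpace ℝ (Fin N))} (hA : MeasurableSet A) (hx₀ : A ∈ 𝓝 x₀) :
    Tendsto (fun ε : ℝ => ((∫ x in A, bubble p ε x₀ x ^ sobolevExp N p) -
      ∫ x, bubble p 1 x₀ x ^ sobolevExp N p) / ε ^ ((N : ℝ) - p)) (𝓝[>] 0) (𝓝 0) := by
  have hs := lt_sobolevExp_sub_one_mul hp hpN
  have htail := (tendsto_setIntegral_compl_bubble_rpow_add_one hp hpN hs hA hx₀).neg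
  rw [neg_zero] at htail
  refine htail.congr' ?_
  filter_upwards [self_mem_nhdsWithin] with ε hε
  rw [sub_one_mul_sub_sobolevExp_sub_one (one_pos.trans hp) hpN, ← Real.rpow_add hε, ← neg_div,
    ← integral_bubble_rpow_sobolevExp hp hpN hε,
    ← integral_add_compl hA (integrable_bubble_rpow_sobolevExp hp hpN hε x₀)]
  ring_nf

end CriticalMass

/-- The rescaled difference `(u_ε - U_{ε,x₀}) / ε^{(N-p)/p}` between a family `u` and the bubbles
centred at `x₀`. -/
def bubbleCorrection {N : ℕ} (p : ℝ) (u : ℝ → EuclideanSpace ℝ (Fin N) → ℝ)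
    (x₀ : EuclideanSpace ℝ (Fin N)) (ε : ℝ) (x : EuclideanSpace ℝ (Fin N)) : ℝ :=
  (u ε x - bubble p ε x₀ x) / ε ^ (((N : ℝ) - p) / p)

/-- `u` is a family of projected bubbles `PU_{ε,x₀}` on `Ω` whose rescaled correction converges
uniformly to `h`; in the paper `h = (C₁/C₀) H_λ(·,x₀)`. -/
structure IsProjectedBubble {N : ℕ} (Ω : Set (EuclideanSpace ℝ (Fin N))) (p lam : ℝ)
    (x₀ : EuclideanSpace ℝ (Fin N)) (u : ℝ → EuclideanSpace ℝ (Fin N) → ℝ)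
    (h : EuclideanSpace ℝ (Fin N) → ℝ) : Prop where
  isPositiveDirichlet : ∀ ε > 0, IsPositiveDirichlet Ω (u ε)
  equation : ∀ ε > 0, ∀ x ∈ Ω,
    -pLap p (u ε) x = lam * u ε x ^ (p - 1) + bubble p ε x₀ x ^ (sobolevExp N p - 1)
  correction : TendstoUniformlyOn (bubbleCorrection p u x₀) h (𝓝[>] 0) Ω

namespace IsProjectedBubble

variable {N : ℕ} {p lam : ℝ} {Ω : Set (EuclideanSpace ℝ (Fin N))} {x₀ : EuclideanSpace ℝ (Fin N)}
  {u : ℝ → EuclideanSpace ℝ (Fin N) → ℝ} {h : EuclideanSpace ℝ (Fin N) → ℝ} {ε : ℝ}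

lemma continuousOn_closure_correction (hu : IsProjectedBubble Ω p lam x₀ u h) (hp : 1 < p)
    (hε : 0 < ε) : ContinuousOn (bubbleCorrection p u x₀ ε) (closure Ω) :=
  ((hu.isPositiveDirichlet ε hε).contDiffOn.continuousOn.sub
    (continuous_bubble hp hε x₀).continuousOn).div_const _

lemma eventually_continuousOn_correction (hu : IsProjectedBubble Ω p lam x₀ u h) (hp : 1 < p) :
    ∀ᶠ ε in 𝓝[>] 0, ContinuousOn (bubbleCorrection p u x₀ ε) Ω :=
  eventually_mem_nhdsWithin.mono fun _ hε =>
    (hu.continuousOn_closure_correction hp hε).mono subset_closure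

lemma exists_bound_correction (hu : IsProjectedBubble Ω p lam x₀ u h) (hp : 1 < p)
    (hΩb : Bornology.IsBounded Ω) :
    ∃ M, ∀ᶠ ε in 𝓝[>] 0, ∀ x ∈ Ω, |bubbleCorrection p u x₀ ε x| ≤ M := by
  refine exists_eventually_bound_of_tendstoUniformlyOn hu.correction ?_
  filter_upwards [self_mem_nhdsWithin] with ε hε
  obtain ⟨B, hB⟩ := hΩb.isCompact_closure.exists_bound_of_continuousOn
    (hu.continuousOn_closure_correction hp hε)
  exact ⟨B, fun x hx => hB x (subset_closure hx)⟩

lemma tendsto_correction (hu : IsProjectedBubble Ω p lam x₀ u h) (hp : 1 < p) (hx₀ : Ω ∈ 𝓝 x₀) :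
    Tendsto (Function.uncurry (bubbleCorrection p u x₀)) (𝓝[>] 0 ×ˢ 𝓝 x₀) (𝓝 (h x₀)) := by
  have hcont := hu.correction.continuousOn (hu.eventually_continuousOn_correction hp).frequently
  exact tendsto_uncurry_of_tendstoUniformlyOn hu.correction hx₀ (hcont.continuousAt hx₀)

lemma integrableOn_bubble_rpow_mul (hu : IsProjectedBubble Ω p lam x₀ u h) (hp : 1 < p)
    (hpN : p < N) (hΩb : Bornology.IsBounded Ω) (hε : 0 < ε) (s : ℝ) :
    IntegrableOn (fun x => bubble p ε x₀ x ^ s * u ε x) Ω :=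
  integrableOn_of_continuousOn_closure hΩb <|
    (continuous_bubble_rpow hp hpN hε x₀ s).continuousOn.mul
      (hu.isPositiveDirichlet ε hε).contDiffOn.continuousOn

lemma integrableOn_rpow (hu : IsProjectedBubble Ω p lam x₀ u h) (hΩb : Bornology.IsBounded Ω)
    (hε : 0 < ε) {s : ℝ} (hs : 0 ≤ s) : IntegrableOn (fun x => u ε x ^ s) Ω :=
  integrableOn_of_continuousOn_closure hΩb <|
    (hu.isPositiveDirichlet ε hε).contDiffOn.continuousOn.rpow_const fun _ _ => .inr hs

lemma tendsto_setIntegral_source_mul_sub (hu : IsProjectedBubble Ω p lam x₀ u h) (hp : 1 < p)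
    (hpN : p < N) (hΩ : IsOpen Ω) (hΩb : Bornology.IsBounded Ω) (hx₀ : x₀ ∈ Ω) :
    Tendsto (fun ε : ℝ => (∫ x in Ω, bubble p ε x₀ x ^ (sobolevExp N p - 1) *
      (u ε x - bubble p ε x₀ x)) / ε ^ ((N : ℝ) - p)) (𝓝[>] 0)
      (𝓝 ((∫ x, bubble p 1 x₀ x ^ (sobolevExp N p - 1)) * h x₀)) := by
  obtain ⟨M, hM⟩ := hu.exists_bound_correction hp hΩb
  have hs := lt_sobolevExp_sub_one_mul hp hpN
  have hlim := tendsto_setIntegral_bubble_rpow_mul hp hpN hs hΩ.measurableSet (hΩ.mem_nhds hx₀)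
    (hu.eventually_continuousOn_correction hp) hM (hu.tendsto_correction hp (hΩ.mem_nhds hx₀))
  simp only [sub_one_mul_sub_sobolevExp_sub_one (one_pos.trans hp) hpN] at hlim
  refine hlim.congr' ?_
  filter_upwards [self_mem_nhdsWithin] with ε hε
  simp only [bubbleCorrection, ← mul_div_assoc]
  rw [integral_div, div_div, ← Real.rpow_add hε, add_sub_cancel]

lemma tendsto_setIntegral_source_mul (hu : IsProjectedBubble Ω p lam x₀ u h) (hp : 1 < p)
    (hpN : p < N) (hΩ : IsOpen Ω) (hΩb : Bornology.IsBounded Ω) (hx₀ : x₀ ∈ Ω) :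
    Tendsto (fun ε : ℝ => ((∫ x in Ω, bubble p ε x₀ x ^ (sobolevExp N p - 1) * u ε x) -
      ∫ x, bubble p 1 x₀ x ^ sobolevExp N p) / ε ^ ((N : ℝ) - p)) (𝓝[>] 0)
      (𝓝 ((∫ x, bubble p 1 x₀ x ^ (sobolevExp N p - 1)) * h x₀)) := by
  have hlim := (hu.tendsto_setIntegral_source_mul_sub hp hpN hΩ hΩb hx₀).add
    (tendsto_setIntegral_bubble_rpow_sobolevExp_sub hp hpN hΩ.measurableSet (hΩ.mem_nhds hx₀))
  rw [add_zero] at hlim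
  refine hlim.congr' ?_
  filter_upwards [self_mem_nhdsWithin] with ε hε
  have hmass : ∀ x, bubble p ε x₀ x ^ (sobolevExp N p - 1) * bubble p ε x₀ x =
      bubble p ε x₀ x ^ sobolevExp N p := fun x => by
    rw [← Real.rpow_add_one (bubble_pos hp hpN hε x₀ x).ne', sub_add_cancel]
  simp only [mul_sub, hmass]
  rw [integral_sub (hu.integrableOn_bubble_rpow_mul hp hpN hΩb hε _)
    (integrable_bubble_rpow_sobolevExp hp hpN hε x₀).integrableOn]
  ring

lemma exists_abs_sub_bubble_le (hu : IsProjectedBubble Ω p lam x₀ u h) (hp : 1 < p)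
    (hΩb : Bornology.IsBounded Ω) :
    ∃ M, 0 ≤ M ∧ ∀ᶠ ε in 𝓝[>] 0, ∀ x ∈ Ω,
      |u ε x - bubble p ε x₀ x| ≤ M * ε ^ (((N : ℝ) - p) / p) := by
  obtain ⟨M, hM⟩ := hu.exists_bound_correction hp hΩb
  refine ⟨|M|, abs_nonneg M, ?_⟩
  filter_upwards [hM, self_mem_nhdsWithin] with ε hMε hε x hx
  have hpos := Real.rpow_pos_of_pos hε (((N : ℝ) - p) / p)
  rw [← div_le_iff₀ hpos, ← abs_of_pos hpos, ← abs_div]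
  exact (hMε x hx).trans (le_abs_self M)

lemma exists_eventually_abs_setIntegral_rpow_sub_tangent_le (hu : IsProjectedBubble Ω p lam x₀ u h)
    (hp : 1 < p) (hpN : p < N) (hΩ : IsOpen Ω) (hΩb : Bornology.IsBounded Ω) {θ : ℝ}
    (hθ0 : 0 ≤ θ) (hθ1 : θ ≤ 1) (hθ : θ * ((N : ℝ) - p) < p) :
    ∃ C C' : ℝ, ∀ᶠ ε in 𝓝[>] 0, |∫ x in Ω, (u ε x ^ sobolevExp N p -
      bubble p ε x₀ x ^ sobolevExp N p -
      sobolevExp N p * bubble p ε x₀ x ^ (sobolevExp N p - 1) * (u ε x - bubble p ε x₀ x))| ≤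
      C * ((∫ x in Ω, bubble p ε x₀ x ^ (sobolevExp N p - 1 - θ)) *
        ε ^ (((N : ℝ) - p) / p * (1 + θ))) + C' * ε ^ (N : ℝ) := by
  have hp0 : 0 < p := one_pos.trans hp
  obtain ⟨C, hC⟩ := exists_abs_setIntegral_rpow_sub_tangent_le hΩ.measurableSet
    (hΩb.measure_lt_top (μ := volume)).ne (hp.trans (lt_sobolevExp hp0 hpN)) hθ0 hθ1
  obtain ⟨M, hM0, hM⟩ := hu.exists_abs_sub_bubble_le hp hΩb
  refine ⟨C * M ^ (1 + θ), C * (volume.real Ω * M ^ sobolevExp N p), ?_⟩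
  filter_upwards [hM, self_mem_nhdsWithin] with ε hMε hε
  replace hε : 0 < ε := hε
  have hint := integrable_bubble_rpow hp hpN hε (lt_sobolevExp_sub_mul hp hpN hθ) x₀
  refine (hC (u ε) (bubble p ε x₀) _ (hu.isPositiveDirichlet ε hε).pos
    (fun x _ => bubble_pos hp hpN hε x₀ x) hMε hint.integrableOn).trans_eq ?_
  simp only [Real.mul_rpow hM0 (Real.rpow_nonneg hε.le _), ← Real.rpow_mul hε.le,
    mul_comm (((N : ℝ) - p) / p) (sobolevExp N p), sobolevExp_mul_div hp0 hpN]
  ring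

lemma tendsto_setIntegral_rpow_sub_tangent (hu : IsProjectedBubble Ω p lam x₀ u h) (hp : 1 < p)
    (hpN : p < N) (hΩ : IsOpen Ω) (hΩb : Bornology.IsBounded Ω) (hx₀ : x₀ ∈ Ω) :
    Tendsto (fun ε : ℝ => (∫ x in Ω, (u ε x ^ sobolevExp N p - bubble p ε x₀ x ^ sobolevExp N p -
      sobolevExp N p * bubble p ε x₀ x ^ (sobolevExp N p - 1) * (u ε x - bubble p ε x₀ x))) /
      ε ^ ((N : ℝ) - p)) (𝓝[>] 0) (𝓝 0) := by
  have hp0 : 0 < p := one_pos.trans hp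
  have hNp : 0 < (N : ℝ) - p := sub_pos.2 hpN
  obtain ⟨θ, hθ0, hθ⟩ := exists_between (lt_min one_pos (div_pos hp0 hNp))
  obtain ⟨hθ1, hθp⟩ := lt_min_iff.1 hθ
  rw [lt_div_iff₀ hNp] at hθp
  obtain ⟨C, C', hC⟩ :=
    hu.exists_eventually_abs_setIntegral_rpow_sub_tangent_le hp hpN hΩ hΩb hθ0.le hθ1.le hθp
  have hbulk := (tendsto_setIntegral_bubble_rpow hp hpN (lt_sobolevExp_sub_mul hp hpN hθp)
    hΩ.measurableSet (hΩ.mem_nhds hx₀)).mul (tendsto_rpow_nhdsGT_zero (mul_pos hNp hθ0))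
  have hlim := (hbulk.const_mul C).add ((tendsto_rpow_nhdsGT_zero hp0).const_mul C')
  simp only [mul_zero, add_zero, sub_one_mul_sub_sobolevExp hp0 hpN] at hlim
  refine squeeze_zero_norm' ?_ hlim
  filter_upwards [hC, self_mem_nhdsWithin] with ε hCε hε
  replace hε : 0 < ε := hε
  have hN : ε ^ (N : ℝ) = ε ^ p * ε ^ ((N : ℝ) - p) := by
    rw [← Real.rpow_add hε, add_sub_cancel]
  have hθN : ε ^ (((N : ℝ) - p) * (1 + θ)) = ε ^ (((N : ℝ) - p) * θ) * ε ^ ((N : ℝ) - p) := by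
    rw [← Real.rpow_add hε]
    ring_nf
  rw [norm_div, Real.norm_eq_abs, Real.norm_of_nonneg (by positivity), div_le_iff₀ (by positivity)]
  refine hCε.trans_eq ?_
  rw [hN, Real.rpow_sub hε ((N - p) * (1 + θ)), hθN]
  field_simp

lemma tendsto_setIntegral_rpow_sobolevExp (hu : IsProjectedBubble Ω p lam x₀ u h) (hp : 1 < p)
    (hpN : p < N) (hΩ : IsOpen Ω) (hΩb : Bornology.IsBounded Ω) (hx₀ : x₀ ∈ Ω) :
    Tendsto (fun ε : ℝ => ((∫ x in Ω, u ε x ^ sobolevExp N p) -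
      ∫ x, bubble p 1 x₀ x ^ sobolevExp N p) / ε ^ ((N : ℝ) - p)) (𝓝[>] 0)
      (𝓝 (sobolevExp N p * ((∫ x, bubble p 1 x₀ x ^ (sobolevExp N p - 1)) * h x₀))) := by
  have hp0 : 0 < p := one_pos.trans hp
  have hlim := ((hu.tendsto_setIntegral_rpow_sub_tangent hp hpN hΩ hΩb hx₀).add
    (tendsto_setIntegral_bubble_rpow_sobolevExp_sub hp hpN hΩ.measurableSet
      (hΩ.mem_nhds hx₀))).add
    ((hu.tendsto_setIntegral_source_mul_sub hp hpN hΩ hΩb hx₀).const_mul (sobolevExp N p))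
  simp only [zero_add] at hlim
  refine hlim.congr' ?_
  filter_upwards [self_mem_nhdsWithin] with ε hε
  have hbubble := (integrable_bubble_rpow_sobolevExp hp hpN hε x₀).integrableOn (s := Ω)
  have hpow := hu.integrableOn_rpow hΩb hε (hp0.trans (lt_sobolevExp hp0 hpN)).le
  have hsub : IntegrableOn (fun x => u ε x ^ sobolevExp N p - bubble p ε x₀ x ^ sobolevExp N p) Ω :=
    hpow.sub hbubble
  have hlin : IntegrableOn (fun x => bubble p ε x₀ x ^ (sobolevExp N p - 1) *
      (u ε x - bubble p ε x₀ x)) Ω :=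
    integrableOn_of_continuousOn_closure hΩb <|
      (continuous_bubble_rpow hp hpN hε x₀ _).continuousOn.mul <|
        (hu.isPositiveDirichlet ε hε).contDiffOn.continuousOn.sub
          (continuous_bubble hp hε x₀).continuousOn
  simp only [mul_assoc (sobolevExp N p)]
  rw [integral_sub hsub (hlin.const_mul _), integral_sub hpow hbubble,
    integral_const_mul]
  ring

lemma setIntegral_abs_rpow (hu : IsProjectedBubble Ω p lam x₀ u h) (hΩ : IsOpen Ω) (hε : 0 < ε)
    (s : ℝ) : ∫ x in Ω, |u ε x| ^ s = ∫ x in Ω, u ε x ^ s :=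
  setIntegral_congr_fun hΩ.measurableSet fun x hx => by
    simp only [abs_of_pos ((hu.isPositiveDirichlet ε hε).pos x hx)]

end IsProjectedBubble

section Quotient

variable {ι : Type*} {l : Filter ι} {t n d : ι → ℝ} {a L K : ℝ}

lemma tendsto_of_tendsto_sub_div (ht : Tendsto t l (𝓝[≠] 0))
    (hd : Tendsto (fun i => (d i - a) / t i) l (𝓝 K)) : Tendsto d l (𝓝 a) := by
  have hlim := (hd.mul (ht.mono_right nhdsWithin_le_nhds)).const_add a
  rw [mul_zero, add_zero] at hlim
  refine hlim.congr' ((ht.eventually self_mem_nhdsWithin).mono fun i hi => ?_)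
  rw [div_mul_cancel₀ _ hi, add_sub_cancel]

lemma tendsto_comp_sub_div_of_hasDerivAt {f : ℝ → ℝ} {f' : ℝ} (hf : HasDerivAt f f' a)
    (ht : Tendsto t l (𝓝[≠] 0)) (hd : Tendsto (fun i => (d i - a) / t i) l (𝓝 K)) :
    Tendsto (fun i => (f (d i) - f a) / t i) l (𝓝 (K * f')) := by
  have hda : Tendsto (fun i => d i - a) l (𝓝 0) :=
    tendsto_sub_nhds_zero_iff.2 (tendsto_of_tendsto_sub_div ht hd)
  have hlim := hf.hasFDerivAt.hasFDerivWithinAt.lim (s := Set.univ) (c := fun i => (t i)⁻¹) hda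
    (.of_forall fun _ => trivial) (by simpa only [smul_eq_mul, inv_mul_eq_div] using hd)
  simpa [inv_mul_eq_div] using hlim

lemma tendsto_div_rpow_sub_div (ha : 0 < a) (κ : ℝ) (ht : Tendsto t l (𝓝[≠] 0))
    (hn : Tendsto (fun i => (n i - a) / t i) l (𝓝 L))
    (hd : Tendsto (fun i => (d i - a) / t i) l (𝓝 K)) :
    Tendsto (fun i => (n i / d i ^ κ - a ^ (1 - κ)) / t i) l (𝓝 (a ^ (-κ) * (L - κ * K))) := by
  have hda := tendsto_of_tendsto_sub_div ht hd
  have hpow := tendsto_comp_sub_div_of_hasDerivAt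
    (Real.hasDerivAt_rpow_const (p := -κ) (.inl ha.ne')) ht hd
  have hlim := (hn.mul (hda.rpow_const (p := -κ) (.inl ha.ne'))).add (hpow.const_mul a)
  have hval : L * a ^ (-κ) + a * (K * (-κ * a ^ (-κ - 1))) = a ^ (-κ) * (L - κ * K) := by
    rw [Real.rpow_sub_one ha.ne']
    field_simp
    ring
  rw [hval] at hlim
  refine hlim.congr' ((hda.eventually (lt_mem_nhds ha)).mono fun i hi => ?_)
  rw [sub_eq_add_neg 1 κ, Real.rpow_add ha, Real.rpow_one, Real.rpow_neg hi.le]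
  ring

end Quotient

/-- The level `S₀ = (∫ U₁^{p^*})^{p/N}`, independent of the centre `x₀` of the bubble. -/
def bubbleLevel {N : ℕ} (p : ℝ) (x₀ : EuclideanSpace ℝ (Fin N)) : ℝ :=
  (∫ x, bubble p 1 x₀ x ^ sobolevExp N p) ^ (p / N)

lemma bubbleLevel_pos {N : ℕ} {p : ℝ} (hp : 1 < p) (hpN : p < N)
    (x₀ : EuclideanSpace ℝ (Fin N)) : 0 < bubbleLevel p x₀ :=
  Real.rpow_pos_of_pos (integral_bubble_rpow_sobolevExp_pos hp hpN x₀) _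

namespace IsProjectedBubble

variable {N : ℕ} {p lam : ℝ} {Ω : Set (EuclideanSpace ℝ (Fin N))} {x₀ : EuclideanSpace ℝ (Fin N)}
  {u : ℝ → EuclideanSpace ℝ (Fin N) → ℝ} {h : EuclideanSpace ℝ (Fin N) → ℝ} {ε : ℝ}

lemma energy (hu : IsProjectedBubble Ω p lam x₀ u h) (hp : 1 < p) (hpN : p < N) (hlam : 0 ≤ lam)
    (hΩ : IsOpen Ω) (hΩb : Bornology.IsBounded Ω) (hε : 0 < ε) :
    IntegrableOn (fun x => ‖gradient (u ε) x‖ ^ p) Ω ∧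
      ∫ x in Ω, ‖gradient (u ε) x‖ ^ p = lam * (∫ x in Ω, u ε x ^ p) +
        ∫ x in Ω, bubble p ε x₀ x ^ (sobolevExp N p - 1) * u ε x := by
  have hp0 : 0 < p := one_pos.trans hp
  have huε := hu.isPositiveDirichlet ε hε
  set g := fun x => lam * u ε x ^ (p - 1) + bubble p ε x₀ x ^ (sobolevExp N p - 1) with hg
  have hgcont : ContinuousOn g Ω :=
    (continuousOn_const.mul (huε.continuousOn.rpow_const fun _ _ => .inr (sub_pos.2 hp).le)).add
      (continuous_bubble_rpow hp hpN hε x₀ _).continuousOn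
  have hgpos : ∀ x ∈ Ω, 0 < g x := fun x hx =>
    add_pos_of_nonneg_of_pos (mul_nonneg hlam (Real.rpow_nonneg (huε.pos x hx).le _))
      (Real.rpow_pos_of_pos (bubble_pos hp hpN hε x₀ x) _)
  have hpow := (hu.integrableOn_rpow hΩb hε hp0.le).const_mul lam
  have hsource := hu.integrableOn_bubble_rpow_mul hp hpN hΩb hε (sobolevExp N p - 1)
  have hsplit : Set.EqOn (fun x => g x * u ε x) (fun x => lam * u ε x ^ p +
      bubble p ε x₀ x ^ (sobolevExp N p - 1) * u ε x) Ω := fun x hx => by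
    simp only [hg, add_mul, mul_assoc, ← Real.rpow_add_one (huε.pos x hx).ne', sub_add_cancel]
  have hgu : IntegrableOn (fun x => g x * u ε x) Ω :=
    (integrableOn_congr_fun hsplit hΩ.measurableSet).2 (hpow.add hsource)
  refine ⟨huε.integrableOn_norm_gradient_rpow hΩ hΩb hp0 hgcont hgpos (hu.equation ε hε) hgu, ?_⟩
  rw [huε.energy_identity hΩ hΩb hp0 hgcont hgpos (hu.equation ε hε) hgu,
    setIntegral_congr_fun hΩ.measurableSet hsplit, integral_add hpow hsource, integral_const_mul]

lemma Qfun_eq (hu : IsProjectedBubble Ω p lam x₀ u h) (hp : 1 < p) (hpN : p < N) (hlam : 0 ≤ lam)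
    (hΩ : IsOpen Ω) (hΩb : Bornology.IsBounded Ω) (hε : 0 < ε) :
    Qfun Ω p lam (u ε) = (∫ x in Ω, bubble p ε x₀ x ^ (sobolevExp N p - 1) * u ε x) /
      (∫ x in Ω, u ε x ^ sobolevExp N p) ^ (p / sobolevExp N p) := by
  rw [Qfun, ← sobolevExp, hu.setIntegral_abs_rpow hΩ hε, hu.setIntegral_abs_rpow hΩ hε,
    (hu.energy hp hpN hlam hΩ hΩb hε).2, add_sub_cancel_left]

lemma Sfun_le_Qfun (hu : IsProjectedBubble Ω p lam x₀ u h) (hp : 1 < p) (hpN : p < N)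
    (hlam : 0 ≤ lam) (hΩ : IsOpen Ω) (hΩb : Bornology.IsBounded Ω) (hx₀ : x₀ ∈ Ω) (hε : 0 < ε) :
    Sfun Ω p lam ≤ Qfun Ω p lam (u ε) := by
  have hp0 : 0 < p := one_pos.trans hp
  have hpow := hu.integrableOn_rpow hΩb hε (hp0.trans (lt_sobolevExp hp0 hpN)).le
  have hpos : ∀ x ∈ Ω, 0 < u ε x ^ sobolevExp N p := fun x hx =>
    Real.rpow_pos_of_pos ((hu.isPositiveDirichlet ε hε).pos x hx) _
  have hmass : 0 < ∫ x in Ω, u ε x ^ sobolevExp N p := by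
    rw [setIntegral_pos_iff_support_of_nonneg_ae
      ((ae_restrict_mem hΩ.measurableSet).mono fun x hx => (hpos x hx).le) hpow,
      Set.inter_eq_right.2 (show Ω ⊆ Function.support _ from fun x hx => (hpos x hx).ne')]
    exact hΩ.measure_pos volume ⟨x₀, hx₀⟩
  refine (hu.isPositiveDirichlet ε hε).Sfun_le_Qfun hp0 hpN hΩ hΩb
    (hu.energy hp hpN hlam hΩ hΩb hε).1 ?_
  rw [hu.setIntegral_abs_rpow hΩ hε]
  exact hmass.ne'

lemma tendsto_Qfun_sub_div (hu : IsProjectedBubble Ω p lam x₀ u h) (hp : 1 < p) (hpN : p < N)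
    (hlam : 0 ≤ lam) (hΩ : IsOpen Ω) (hΩb : Bornology.IsBounded Ω) (hx₀ : x₀ ∈ Ω) :
    Tendsto (fun ε => (Qfun Ω p lam (u ε) - bubbleLevel p x₀) / ε ^ ((N : ℝ) - p)) (𝓝[>] 0)
      (𝓝 (-((p - 1) * bubbleLevel p x₀ ^ ((p - N) / p) *
        (∫ x, bubble p 1 x₀ x ^ (sobolevExp N p - 1)) * h x₀))) := by
  have hp0 : 0 < p := one_pos.trans hp
  have hq := hp0.trans (lt_sobolevExp hp0 hpN)
  have hN : (0 : ℝ) < N := hp0.trans hpN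
  have hA := integral_bubble_rpow_sobolevExp_pos hp hpN x₀
  have ht : Tendsto (fun ε : ℝ => ε ^ ((N : ℝ) - p)) (𝓝[>] 0) (𝓝[≠] 0) :=
    tendsto_nhdsWithin_iff.2 ⟨tendsto_rpow_nhdsGT_zero (sub_pos.2 hpN),
      eventually_mem_nhdsWithin.mono fun ε hε => (Real.rpow_pos_of_pos hε _).ne'⟩
  have hlim := tendsto_div_rpow_sub_div hA (p / sobolevExp N p) ht
    (hu.tendsto_setIntegral_source_mul hp hpN hΩ hΩb hx₀)
    (hu.tendsto_setIntegral_rpow_sobolevExp hp hpN hΩ hΩb hx₀)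
  have hexp : -(p / sobolevExp N p) = p / N * ((p - N) / p) := by
    have hNp : p / N * ((p - N) / p) = p / N - 1 := by field_simp
    linear_combination one_sub_div_sobolevExp hp0 hpN - hNp
  rw [one_sub_div_sobolevExp hp0 hpN, ← mul_assoc (p / _), div_mul_cancel₀ _ hq.ne', hexp,
    Real.rpow_mul hA.le, ← bubbleLevel] at hlim
  convert hlim.congr' (eventually_mem_nhdsWithin.mono fun ε hε => ?_) using 2
  · ring
  · rw [hu.Qfun_eq hp hpN hlam hΩ hΩb hε]

end IsProjectedBubble

theorem energy_expansion_and_Slam_lt_S0_general {N : ℕ} {p lam : ℝ} (hp : 1 < p) (hpN : p < N)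
    {Ω : Set (EuclideanSpace ℝ (Fin N))} (hΩ : IsOpen Ω) (hΩb : Bornology.IsBounded Ω)
    (hlam : 0 ≤ lam) {x₀ : EuclideanSpace ℝ (Fin N)} (hx₀ : x₀ ∈ Ω)
    {u : ℝ → EuclideanSpace ℝ (Fin N) → ℝ} {h : EuclideanSpace ℝ (Fin N) → ℝ}
    (hu : IsProjectedBubble Ω p lam x₀ u h) :
    (fun ε : ℝ => Qfun Ω p lam (u ε) - (bubbleLevel p x₀ - (p - 1) *
        bubbleLevel p x₀ ^ ((p - N) / p) * (∫ x, bubble p 1 x₀ x ^ (sobolevExp N p - 1)) * h x₀ *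
          ε ^ ((N : ℝ) - p))) =o[𝓝[>] 0] (fun ε : ℝ => ε ^ ((N : ℝ) - p)) ∧
    (0 < h x₀ → Sfun Ω p lam < bubbleLevel p x₀) := by
  have hlim := hu.tendsto_Qfun_sub_div hp hpN hlam hΩ hΩb hx₀
  have hpow : ∀ᶠ ε : ℝ in 𝓝[>] 0, 0 < ε ^ ((N : ℝ) - p) :=
    eventually_mem_nhdsWithin.mono fun ε hε => Real.rpow_pos_of_pos hε _
  refine ⟨(isLittleO_iff_tendsto' (hpow.mono fun ε hε h0 => absurd h0 hε.ne')).2 ?_, fun hh => ?_⟩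
  · refine (tendsto_sub_nhds_zero_iff.2 hlim).congr' (hpow.mono fun ε hε => ?_)
    field_simp
    ring
  · have hneg := neg_lt_zero.2 (mul_pos (mul_pos (mul_pos (sub_pos.2 hp)
      (Real.rpow_pos_of_pos (bubbleLevel_pos hp hpN x₀) ((p - N) / p)))
      (integral_bubble_rpow_sobolevExp_sub_one_pos hp hpN x₀)) hh)
    obtain ⟨ε, ⟨hQ, hεN⟩, hε⟩ :=
      (((hlim.eventually (gt_mem_nhds hneg)).and hpow).and eventually_mem_nhdsWithin).exists
    calc Sfun Ω p lam ≤ Qfun Ω p lam (u ε) := hu.Sfun_le_Qfun hp hpN hlam hΩ hΩb hx₀ hε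
      _ < bubbleLevel p x₀ := sub_neg.1 (neg_of_div_neg_left hQ hεN.le)

lemma tendstoUniformlyOn_bubbleCorrection {N : ℕ} {p c : ℝ} {Ω : Set (EuclideanSpace ℝ (Fin N))}
    {x₀ : EuclideanSpace ℝ (Fin N)} {u : ℝ → EuclideanSpace ℝ (Fin N) → ℝ}
    {H : EuclideanSpace ℝ (Fin N) → ℝ}
    (h : ∀ δ : ℝ, 0 < δ → ∀ᶠ ε in 𝓝[>] (0 : ℝ), ∀ x ∈ Ω,
      |u ε x - bubble p ε x₀ x - c * ε ^ (((N : ℝ) - p) / p) * H x| ≤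
        δ * ε ^ (((N : ℝ) - p) / p)) :
    TendstoUniformlyOn (bubbleCorrection p u x₀) (fun x => c * H x) (𝓝[>] 0) Ω := by
  refine Metric.tendstoUniformlyOn_iff.2 fun δ hδ => ?_
  filter_upwards [h (δ / 2) (half_pos hδ), self_mem_nhdsWithin] with ε hle hε x hx
  have hpos : 0 < ε ^ (((N : ℝ) - p) / p) := Real.rpow_pos_of_pos hε _
  have heq : bubbleCorrection p u x₀ ε x - c * H x = (u ε x - bubble p ε x₀ x -
      c * ε ^ (((N : ℝ) - p) / p) * H x) / ε ^ (((N : ℝ) - p) / p) := by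
    rw [bubbleCorrection]
    field_simp
  rw [dist_comm, Real.dist_eq, heq, abs_div, abs_of_pos hpos]
  exact ((div_le_iff₀ hpos).2 (hle x hx)).trans_lt (half_lt_self hδ)

/-- if the regular part `H = G_λ(·,x₀) - Γ(·,x₀)` of the Green function
is bounded, `α`-Hölder at `x₀` and `H(x₀) > 0`, and `PU_{ε,x₀}` admits the uniform
expansion `PU_{ε,x₀} = U_{ε,x₀} + (C₁/C₀) ε^{(N-p)/p} H + o(ε^{(N-p)/p})`, then
`Q_λ(PU_{ε,x₀}) = S₀ - (p-1) S₀^{(p-N)/p} (∫ U₁^{p^*-1}) (C₁/C₀) ε^{N-p} H(x₀)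
 + o(ε^{N-p})` as `ε → 0⁺`, and consequently `S_λ < S₀`,
where `S₀ = (∫ U₁^{p^*})^{p/N}`. -/
theorem energy_expansion_and_Slam_lt_S0 (N : ℕ) (p lam : ℝ)
    (hp : 2 ≤ p) (hpN : p < N) (hN2p : (N : ℝ) < 2 * p)
    (Ω : Set (EuclideanSpace ℝ (Fin N))) (hΩo : IsOpen Ω) (hΩc : IsConnected Ω)
    (hΩb : Bornology.IsBounded Ω)
    (hlam : 0 < lam) (hlam1 : lam < lamOne Ω p)
    (x₀ : EuclideanSpace ℝ (Fin N)) (hx₀ : x₀ ∈ Ω)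
    (G H : EuclideanSpace ℝ (Fin N) → ℝ)
    (hGH : ∀ x, H x = G x - Czero N p * ‖x - x₀‖ ^ (-(((N : ℝ) - p) / (p - 1))))
    (hGsol : ∀ x ∈ Ω, x ≠ x₀ → -pLap p G x = lam * G x ^ (p - 1))
    (hGpos : ∀ x ∈ Ω, x ≠ x₀ → 0 < G x) (hGbd : ∀ x ∈ frontier Ω, G x = 0)
    (hHbd : ∃ M, ∀ x ∈ Ω, |H x| ≤ M)
    (hHolder : ∃ C : ℝ, ∃ α ∈ Set.Ioo (0 : ℝ) 1, ∀ x ∈ Ω,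
      |H x - H x₀| ≤ C * ‖x - x₀‖ ^ α)
    (hHpos : 0 < H x₀)
    (PU : ℝ → EuclideanSpace ℝ (Fin N) → ℝ)
    (hPUsol : ∀ ε : ℝ, 0 < ε → ∀ x ∈ Ω,
      -pLap p (PU ε) x = lam * PU ε x ^ (p - 1) +
        bubble p ε x₀ x ^ ((N : ℝ) * p / ((N : ℝ) - p) - 1))
    (hPUpos : ∀ ε : ℝ, 0 < ε → ∀ x ∈ Ω, 0 < PU ε x)
    (hPUzero : ∀ ε : ℝ, 0 < ε → ∀ x ∉ Ω, PU ε x = 0)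
    (hPUreg : ∀ ε : ℝ, 0 < ε → ContDiffOn ℝ 1 (PU ε) (closure Ω))
    (hexp : ∀ δ : ℝ, 0 < δ → ∀ᶠ ε in 𝓝[>] (0 : ℝ), ∀ x ∈ Ω,
      |PU ε x - bubble p ε x₀ x -
          (Cone N p / Czero N p) * ε ^ (((N : ℝ) - p) / p) * H x| ≤
        δ * ε ^ (((N : ℝ) - p) / p)) :
    (fun ε : ℝ => Qfun Ω p lam (PU ε) -
        ((∫ x, bubble p 1 x₀ x ^ ((N : ℝ) * p / ((N : ℝ) - p))) ^ (p / N) -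
          (p - 1) *
            ((∫ x, bubble p 1 x₀ x ^ ((N : ℝ) * p / ((N : ℝ) - p))) ^ (p / N))
              ^ ((p - N) / p) *
            (∫ x, bubble p 1 x₀ x ^ ((N : ℝ) * p / ((N : ℝ) - p) - 1)) *
            (Cone N p / Czero N p) * ε ^ ((N : ℝ) - p) * H x₀))
      =o[𝓝[>] (0 : ℝ)] (fun ε : ℝ => ε ^ ((N : ℝ) - p)) ∧
    Sfun Ω p lam <
      (∫ x, bubble p 1 x₀ x ^ ((N : ℝ) * p / ((N : ℝ) - p))) ^ (p / N) := by
  have hp1 : 1 < p := by linarith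
  have hu : IsProjectedBubble Ω p lam x₀ PU (fun x => Cone N p / Czero N p * H x) :=
    { isPositiveDirichlet := fun ε hε => ⟨hPUreg ε hε, hPUpos ε hε, hPUzero ε hε⟩
      equation := hPUsol
      correction := tendstoUniformlyOn_bubbleCorrection hexp }
  obtain ⟨hexpansion, hlt⟩ := energy_expansion_and_Slam_lt_S0_general hp1 hpN hΩo hΩb hlam.le hx₀ hu
  refine ⟨hexpansion.congr_left fun ε => ?_,
    hlt (mul_pos (div_pos (Cone_pos hp1 hpN) (Czero_pos hp1 hpN)) hHpos)⟩
  rw [bubbleLevel, sobolevExp]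
  ring

end
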